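/- Let d ≥ 2 be an integer, γ > 1 a real number, and c = γ − d − 1. Suppose the reals p, r, ν, κ satisfy: p > 1, r > 1, 1/r = 2/p + (2ν+κ)/d − 1, κ < d/r, ((d−1)/2)(1 − 2/p) < ν < d(p−1)/p, 2r ≥ p, max{ν,κ} > 0, ν + κ ≥ (d−1)(1/r − 1/p), max{0, d + p(c+ν)} < d(r−p)/r + p(ν+κ+1) < γ p (r−1)/r, and additionally γ p (r−1)/r − d(r−p)/r − p(ν+κ+1) > γ and p > r/(r−1). Then for every β ∈ (0,1) there exists A > 0 such that the convex set E_A = {ϑ ∈ RL^p_{u_ν} : ϑ admits a radial bounding function θ̂ ∈ L^p_{u_ν} with |ϑ| ≤ θ̂ a.e. and ‖θ̂‖_{u_ν,p} ≤ A} is invariant under R_β, i.e. R_β[E_A] ⊆ E_A. -/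

import Mathlib

open MeasureTheory Set RealInnerProductSpace
open scoped ENNReal NNReal

noncomputable section

/-- `ℝ^d` with the Euclidean norm. -/
abbrev Ed (d : ℕ) := EuclideanSpace ℝ (Fin d)

/-- `ℂ^d` with the Euclidean norm. -/
abbrev EdC (d : ℕ) := EuclideanSpace ℂ (Fin d)

/-- A function on `ℝ^d` is radial if its value depends only on the norm of the argument. -/
def IsRadial {d : ℕ} {α : Type*} (f : Ed d → α) : Prop :=
  ∀ x y : Ed d, ‖x‖ = ‖y‖ → f x = f y

/-- The pairing `⟨η, v⟩` of a real vector with a complex vector, extended ℂ-bilinearly. -/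
def pairC {d : ℕ} (η : Ed d) (v : EdC d) : ℂ := ∑ i, (η i : ℂ) * v i

/-- The Leray projection `P_η v = v − (⟨v,η⟩/|η|²) η`, extended ℂ-bilinearly. -/
def lerayC {d : ℕ} (η : Ed d) (v : EdC d) : EdC d :=
  (WithLp.equiv 2 (Fin d → ℂ)).symm
    (fun i => v i - (pairC η v / ((‖η‖ ^ 2 : ℝ) : ℂ)) * (η i : ℂ))

/-- The integrand of the nonlinear part of the renormalization operator (complex fields). -/
def renormKernelC (d : ℕ) (γ : ℝ) (ϑ : Ed d → EdC d) (η : Ed d) (t : ℝ) (x : Ed d) : EdC d :=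
  (t ^ (-(γ - d - 1)) * Real.exp (‖η‖ ^ γ * (1 - t ^ γ))) •
    (pairC η (ϑ (t • η - x)) • lerayC η (ϑ x))

/-- Absolute convergence of the integrals defining `R_β[ϑ](η)` (complex fields). -/
def RenormDefinedC (d : ℕ) (γ β : ℝ) (ϑ : Ed d → EdC d) (η : Ed d) : Prop :=
  IntegrableOn (fun q : ℝ × Ed d => renormKernelC d γ ϑ η q.1 q.2)
    (Set.Ioc (1 : ℝ) β⁻¹ ×ˢ Set.univ)

/-- The renormalization operator `R_β` on complex vector fields. -/
def renormC (d : ℕ) (γ β : ℝ) (ϑ : Ed d → EdC d) (η : Ed d) : EdC d :=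
  (β ^ (γ - d - 1) * Real.exp (‖η‖ ^ γ * (1 - β ^ (-γ)))) • ϑ (β⁻¹ • η)
    + (Complex.I * (γ : ℂ)) •
        ∫ t in Set.Ioc (1 : ℝ) β⁻¹, ∫ x : Ed d, renormKernelC d γ ϑ η t x

/-- The Leray projection `P_η v = v − (⟨v,η⟩/|η|²) η` for real vector fields. -/
def lerayR {d : ℕ} (η v : Ed d) : Ed d := v - (⟪v, η⟫ / ‖η‖ ^ 2) • η

/-- The integrand of the nonlinear part of the renormalization operator (real fields). -/
def renormKernelR (d : ℕ) (γ : ℝ) (ψ : Ed d → Ed d) (η : Ed d) (t : ℝ) (x : Ed d) : Ed d :=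
  (t ^ (-(γ - d - 1)) * Real.exp (‖η‖ ^ γ * (1 - t ^ γ))) •
    (⟪η, ψ (t • η - x)⟫ • lerayR η (ψ x))

/-- Absolute convergence of the integrals defining `R_β[ψ](η)` (real fields). -/
def RenormDefinedR (d : ℕ) (γ β : ℝ) (ψ : Ed d → Ed d) (η : Ed d) : Prop :=
  IntegrableOn (fun q : ℝ × Ed d => renormKernelR d γ ψ η q.1 q.2)
    (Set.Ioc (1 : ℝ) β⁻¹ ×ˢ Set.univ)

/-- The renormalization operator `R_β` on real vector fields. -/
def renormR (d : ℕ) (γ β : ℝ) (ψ : Ed d → Ed d) (η : Ed d) : Ed d :=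
  (β ^ (γ - d - 1) * Real.exp (‖η‖ ^ γ * (1 - β ^ (-γ)))) • ψ (β⁻¹ • η)
    - γ • ∫ t in Set.Ioc (1 : ℝ) β⁻¹, ∫ x : Ed d, renormKernelR d γ ψ η t x

/-- First coordinate (`x_{d-1}`) of the projection onto the azimuthal plane. -/
def azim1 {d : ℕ} (x : Ed d) : ℝ := if h : d - 2 < d then x ⟨d - 2, h⟩ else 0

/-- Second coordinate (`x_d`) of the projection onto the azimuthal plane. -/
def azim2 {d : ℕ} (x : Ed d) : ℝ := if h : d - 1 < d then x ⟨d - 1, h⟩ else 0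

/-- The norm `|x_a|` of the azimuthal projection. -/
def normA {d : ℕ} (x : Ed d) : ℝ := Real.sqrt (azim1 x ^ 2 + azim2 x ^ 2)

/-- `cos∠_η(x) = ⟨x_a, η_a⟩ / (|x_a| |η_a|)`. -/
def cosAng {d : ℕ} (η x : Ed d) : ℝ :=
  (azim1 x * azim1 η + azim2 x * azim2 η) / (normA x * normA η)

/-- `sin∠_η(x) = (η_{d−1} x_d − η_d x_{d−1}) / (|x_a| |η_a|)`. -/
def sinAng {d : ℕ} (η x : Ed d) : ℝ :=
  (azim1 η * azim2 x - azim2 η * azim1 x) / (normA x * normA η)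

/-- The integrand of the nonlinear part of the azimuthal renormalization operator. -/
def aKernel (d : ℕ) (γ : ℝ) (ψ : Ed d → ℝ) (η : Ed d) (t : ℝ) (x : Ed d) : ℝ :=
  t ^ (-(γ - d - 1)) * Real.exp (‖η‖ ^ γ * (1 - t ^ γ)) *
    (ψ x * ψ (t • η - x) * cosAng η x * sinAng η (t • η - x))

/-- Absolute convergence of the integrals defining the azimuthal `R_β[ψ](η)`. -/
def ARenormDefined (d : ℕ) (γ β : ℝ) (ψ : Ed d → ℝ) (η : Ed d) : Prop :=
  IntegrableOn (fun q : ℝ × Ed d => aKernel d γ ψ η q.1 q.2)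
    (Set.Ioc (1 : ℝ) β⁻¹ ×ˢ Set.univ)

/-- The azimuthal renormalization operator `R_β` on scalar functions. -/
def arenorm (d : ℕ) (γ β : ℝ) (ψ : Ed d → ℝ) (η : Ed d) : ℝ :=
  β ^ (γ - d - 1) * Real.exp (‖η‖ ^ γ * (1 - β ^ (-γ))) * ψ (β⁻¹ • η)
    + γ * normA η * ∫ t in Set.Ioc (1 : ℝ) β⁻¹, ∫ x : Ed d, aKernel d γ ψ η t x

/-- Weighted `L^p` norm `(∫ |f|^p w^p)^{1/p}` of a scalar function, valued in `ℝ≥0∞`. -/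
def wLpNorm {d : ℕ} (w : Ed d → ℝ) (p : ℝ) (f : Ed d → ℝ) : ℝ≥0∞ :=
  (∫⁻ x : Ed d, ENNReal.ofReal (|f x| ^ p * w x ^ p)) ^ (1 / p)

/-- Weighted `L^p` norm of a `ℂ^d`-valued function, valued in `ℝ≥0∞`. -/
def wLpNormC {d : ℕ} (w : Ed d → ℝ) (p : ℝ) (f : Ed d → EdC d) : ℝ≥0∞ :=
  (∫⁻ x : Ed d, ENNReal.ofReal (‖f x‖ ^ p * w x ^ p)) ^ (1 / p)

/-- The weight `u_ν(x) = e^{|x|} |x|^ν`. -/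
def uWeight (ν : ℝ) {d : ℕ} (x : Ed d) : ℝ := Real.exp ‖x‖ * ‖x‖ ^ ν

/-- The weight `v_ν(x) = e^{(b/2)|x|} |x|^ν`. -/
def vWeight (b ν : ℝ) {d : ℕ} (x : Ed d) : ℝ := Real.exp (b / 2 * ‖x‖) * ‖x‖ ^ ν

/-- Membership in `RL^p_{u_ν}`: fields dominated a.e. by a radial function in `L^p_{u_ν}`. -/
def MemRL (d : ℕ) (p ν : ℝ) (ϑ : Ed d → EdC d) : Prop :=
  AEStronglyMeasurable ϑ volume ∧ ∃ g : Ed d → ℝ, Measurable g ∧ IsRadial g ∧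
    wLpNorm (uWeight ν) p g < ⊤ ∧ ∀ᵐ x : Ed d, ‖ϑ x‖ ≤ g x

/-- Membership in `RL^p_{u_ν}` with a radial bound of norm at most `A`. -/
def MemRLBall (d : ℕ) (p ν A : ℝ) (ϑ : Ed d → EdC d) : Prop :=
  AEStronglyMeasurable ϑ volume ∧ ∃ g : Ed d → ℝ, Measurable g ∧ IsRadial g ∧
    wLpNorm (uWeight ν) p g ≤ ENNReal.ofReal A ∧ ∀ᵐ x : Ed d, ‖ϑ x‖ ≤ g x

/-- Membership in the set `M` of functions bounded by `k |η|^σ e^{−b|η|}`. -/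
def memM {d : ℕ} (k b σ : ℝ) (ψ : Ed d → ℝ) : Prop :=
  Measurable ψ ∧
    ∀ᵐ η : Ed d, η ≠ 0 → |ψ η| < k * ‖η‖ ^ σ * Real.exp (-b * ‖η‖)

/-- Inclusion of a real vector into `ℂ^d`. -/
def toC {d : ℕ} (v : Ed d) : EdC d :=
  (WithLp.equiv 2 (Fin d → ℂ)).symm (fun i => (v i : ℂ))

/-- The azimuthal unit vector field `e_{d−1}(y) = (0,…,0,−y_d,y_{d−1})/|y_a|`. -/
def azVec (d : ℕ) (y : Ed d) : Ed d :=
  (WithLp.equiv 2 (Fin d → ℝ)).symm (fun i =>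
    if (i : ℕ) = d - 2 then -azim2 y / normA y
    else if (i : ℕ) = d - 1 then azim1 y / normA y
    else 0)

/-- The Leray self-similar ansatz
`v_*(y,t) = i (T−t)^{(d+1−γ)/γ} ψ(y (T−t)^{1/γ}) e_{d−1}(y)`. -/
def vfun (d : ℕ) (γ : ℝ) (ψ : Ed d → ℝ) (T : ℝ) (y : Ed d) (t : ℝ) : EdC d :=
  (Complex.I *
      ((((T - t) ^ (((d : ℝ) + 1 - γ) / γ) * ψ (((T - t) ^ (1 / γ)) • y)) : ℝ) : ℂ)) •
    toC (azVec d y)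

end

/-
With `m = d + 1 - (d / p + ν)`, the exponent conditions force `p > 2`, `d / 2 < d / p + ν < d` and
`m < γ`. Moduli of fields are compared with `[0, ∞]`-valued radial majorants. Since `e^{|x|}` is
submultiplicative it passes through convolutions and dilations, so only the power weight `|x|^ν`
needs an analysis.

The linear term of the operator has norm at most `β^(γ - m) < 1`. For the quadratic term, the
convolution of two majorants is split at `|y| < |x| / 2` and `|x - y| < |x| / 2`: Hölder's
inequality on small balls treats these two regions, Cauchy–Schwarz and a Hardy-type inequality the
remaining one. The outcome is a bounded convolution with the weight `|x|^(ν + 1 - m)` on the target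
side. The factor `|η| e^{|η|^γ (1 - t^γ)}` restores the weight `|η|^ν` at the cost of the time
singularity `(t - 1)^(-m / γ)`, integrable because `m < γ`. Hence a majorant of norm `A` is sent to
one of norm at most `β^(γ - m) A + C A²`, which is at most `A` once `A` is small.
-/

section

open Module (finrank)
open Metric (ball)

section PowerIntegrals

theorem lintegral_mul_rpow_le {α : Type*} [MeasurableSpace α] {μ : Measure α} {f g : α → ℝ≥0∞}
    (hf : Measurable f) (hg : Measurable g) {p : ℝ} (hp : 1 < p) :
    (∫⁻ x, f x * g x ∂μ) ^ p ≤ (∫⁻ x, f x ∂μ) ^ (p - 1) * ∫⁻ x, f x * g x ^ p ∂μ := by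
  have hp0 : 0 < p := one_pos.trans hp
  have hpq : p.HolderConjugate (p / (p - 1)) := .conjExponent hp
  have hq : 0 < p / (p - 1) := hpq.symm.pos
  have hsplit (x : α) : f x * g x = (f x ^ (1 / p) * g x) * f x ^ (1 / (p / (p - 1))) := by
    rw [mul_right_comm, ← ENNReal.rpow_add_of_nonneg _ _ (by positivity) (by positivity),
      one_div, one_div, hpq.inv_add_inv_eq_one, ENNReal.rpow_one]
  have hroot (x : α) {r : ℝ} (hr : 0 < r) : (f x ^ (1 / r)) ^ r = f x := by
    rw [one_div, ENNReal.rpow_inv_rpow hr.ne']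
  have hHolder := ENNReal.lintegral_mul_le_Lp_mul_Lq μ hpq
    (f := fun x => f x ^ (1 / p) * g x) (g := fun x => f x ^ (1 / (p / (p - 1))))
    (by fun_prop) (by fun_prop)
  simp only [Pi.mul_apply, ← hsplit, ENNReal.mul_rpow_of_nonneg _ _ hp0.le, hroot _ hp0,
    hroot _ hq] at hHolder
  refine (ENNReal.rpow_le_rpow hHolder hp0.le).trans_eq ?_
  rw [ENNReal.mul_rpow_of_nonneg _ _ hp0.le, ← ENNReal.rpow_mul, ← ENNReal.rpow_mul,
    one_div_mul_cancel hp0.ne', ENNReal.rpow_one, mul_comm]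
  congr 2
  field_simp

theorem rpow_le_two_rpow_abs_mul {x z : ℝ≥0∞} (hxz : x ≤ 2 * z) (hzx : z ≤ 2 * x) (hx : x ≠ 0)
    (a : ℝ) : x ^ a ≤ 2 ^ |a| * z ^ a := by
  rcases le_total 0 a with ha | ha
  · rw [abs_of_nonneg ha, ← ENNReal.mul_rpow_of_nonneg _ _ ha]
    exact ENNReal.rpow_le_rpow hxz ha
  · calc x ^ a = 2 ^ |a| * (2 * x) ^ a := by
          rw [ENNReal.mul_rpow_of_ne_zero two_ne_zero hx, ← mul_assoc,
            ← ENNReal.rpow_add _ _ two_ne_zero ENNReal.ofNat_ne_top, abs_of_nonpos ha,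
            neg_add_cancel, ENNReal.rpow_zero, one_mul]
      _ ≤ 2 ^ |a| * z ^ a := by
          rw [← neg_neg a, ENNReal.rpow_neg (2 * x), ENNReal.rpow_neg z]
          gcongr
          exact neg_nonneg.2 ha

variable {E : Type*} [NormedAddCommGroup E] [NormedSpace ℝ E]

theorem enorm_smul_rpow (x : E) {R : ℝ} (hR : 0 < R) (a : ℝ) :
    ‖R • x‖ₑ ^ a = ENNReal.ofReal R ^ a * ‖x‖ₑ ^ a := by
  rw [enorm_smul, Real.enorm_eq_ofReal hR.le,
    ENNReal.mul_rpow_of_ne_top ENNReal.ofReal_ne_top enorm_ne_top]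

variable [MeasurableSpace E] [BorelSpace E] [FiniteDimensional ℝ E]
  (μ : Measure E) [μ.IsAddHaarMeasure]

theorem lintegral_comp_smul_of_pos {f : E → ℝ≥0∞} (hf : Measurable f) {c : ℝ} (hc : 0 < c) :
    ∫⁻ x, f (c • x) ∂μ = ENNReal.ofReal c ^ (-(finrank ℝ E : ℝ)) * ∫⁻ x, f x ∂μ := by
  rw [← lintegral_map hf (measurable_const_smul c), Measure.map_addHaar_smul μ hc.ne',
    lintegral_smul_measure, smul_eq_mul, abs_of_pos (by positivity),
    ENNReal.ofReal_rpow_of_pos hc, Real.rpow_neg hc.le, Real.rpow_natCast]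

theorem setLIntegral_rpow_enorm_of_smul_mem_iff {S : ℝ → Set E} (hS : ∀ R, MeasurableSet (S R))
    (hSmul : ∀ R, 0 < R → ∀ x, R • x ∈ S R ↔ x ∈ S 1) (a : ℝ) {R : ℝ} (hR : 0 < R) :
    ∫⁻ x in S R, ‖x‖ₑ ^ a ∂μ =
      (∫⁻ x in S 1, ‖x‖ₑ ^ a ∂μ) * ENNReal.ofReal R ^ (finrank ℝ E + a) := by
  have hmeas (r : ℝ) : Measurable ((S r).indicator fun x : E => ‖x‖ₑ ^ a) :=
    (measurable_enorm.pow_const a).indicator (hS r)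
  have hR0 : ENNReal.ofReal R ≠ 0 := (ENNReal.ofReal_pos.2 hR).ne'
  have hdilate (x : E) : (S R).indicator (fun x : E => ‖x‖ₑ ^ a) (R • x) =
      ENNReal.ofReal R ^ a * (S 1).indicator (fun x : E => ‖x‖ₑ ^ a) x := by
    by_cases hx : x ∈ S 1
    · rw [indicator_of_mem hx, indicator_of_mem ((hSmul R hR x).2 hx), enorm_smul_rpow x hR]
    · rw [indicator_of_notMem hx, indicator_of_notMem (mt (hSmul R hR x).1 hx), mul_zero]
  have hchange := lintegral_comp_smul_of_pos μ (hmeas R) hR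
  simp_rw [hdilate] at hchange
  rw [lintegral_const_mul _ (hmeas 1), lintegral_indicator (hS 1),
    lintegral_indicator (hS R)] at hchange
  rw [ENNReal.rpow_add _ _ hR0 ENNReal.ofReal_ne_top, mul_comm, mul_assoc, hchange, ← mul_assoc,
    ← ENNReal.rpow_add _ _ hR0 ENNReal.ofReal_ne_top, add_neg_cancel, ENNReal.rpow_zero, one_mul]

theorem setLIntegral_ball_rpow_enorm (a : ℝ) {R : ℝ} (hR : 0 < R) :
    ∫⁻ x in ball (0 : E) R, ‖x‖ₑ ^ a ∂μ =
      (∫⁻ x in ball (0 : E) 1, ‖x‖ₑ ^ a ∂μ) * ENNReal.ofReal R ^ (finrank ℝ E + a) :=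
  setLIntegral_rpow_enorm_of_smul_mem_iff μ (S := ball 0) (fun _ => measurableSet_ball)
    (fun R hR x => by simp [norm_smul, abs_of_pos hR, mul_lt_iff_lt_one_right hR]) a hR

theorem setLIntegral_ball_compl_rpow_enorm (a : ℝ) {R : ℝ} (hR : 0 < R) :
    ∫⁻ x in (ball (0 : E) R)ᶜ, ‖x‖ₑ ^ a ∂μ =
      (∫⁻ x in (ball (0 : E) 1)ᶜ, ‖x‖ₑ ^ a ∂μ) * ENNReal.ofReal R ^ (finrank ℝ E + a) :=
  setLIntegral_rpow_enorm_of_smul_mem_iff μ (S := fun R => (ball 0 R)ᶜ)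
    (fun _ => measurableSet_ball.compl)
    (fun R hR x => by simp [norm_smul, abs_of_pos hR, le_mul_iff_one_le_right hR]) a hR

variable [Nontrivial E]

theorem ae_enorm_ne_zero : ∀ᵐ x ∂μ, ‖x‖ₑ ≠ 0 := by
  filter_upwards [compl_mem_ae_iff.2 (measure_singleton (0 : E))] with x hx
  exact enorm_ne_zero.2 hx

theorem setLIntegral_norm_preimage_rpow_enorm_ne_top {S : Set ℝ} (hS : MeasurableSet S) {a : ℝ}
    (h : IntegrableOn (fun y : ℝ => y ^ (finrank ℝ E - 1 + a)) (S ∩ Ioi 0)) :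
    ∫⁻ x in (fun x : E => ‖x‖) ⁻¹' S, ‖x‖ₑ ^ a ∂μ ≠ ⊤ := by
  have hradial : Integrable (fun x : E => S.indicator (fun y => y ^ a) ‖x‖) μ := by
    rw [integrable_fun_norm_addHaar μ (f := S.indicator fun y => y ^ a)]
    rw [← integrableOn_indicator_iff hS] at h
    refine h.congr_fun (fun y (hy : 0 < y) => ?_) measurableSet_Ioi
    by_cases hyS : y ∈ S
    · simp only [indicator_of_mem hyS, smul_eq_mul]
      rw [Real.rpow_add hy, ← Nat.cast_pred Module.finrank_pos, Real.rpow_natCast]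
    · simp only [indicator_of_notMem hyS, smul_zero]
  refine ne_top_of_le_ne_top hradial.2.ne ?_
  rw [← lintegral_indicator (measurable_norm hS)]
  refine lintegral_mono_ae ?_
  filter_upwards [ae_enorm_ne_zero μ] with x hx
  have hx0 : 0 < ‖x‖ := norm_pos_iff.2 (enorm_ne_zero.1 hx)
  by_cases hxS : ‖x‖ ∈ S
  · rw [indicator_of_mem (show x ∈ (fun x : E => ‖x‖) ⁻¹' S from hxS), indicator_of_mem hxS,
      Real.enorm_eq_ofReal (by positivity), ← ofReal_norm, ENNReal.ofReal_rpow_of_pos hx0]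
  · rw [indicator_of_notMem (show x ∉ (fun x : E => ‖x‖) ⁻¹' S from hxS)]
    exact zero_le

theorem setLIntegral_unitBall_rpow_enorm_ne_top {a : ℝ} (ha : -(finrank ℝ E : ℝ) < a) :
    ∫⁻ x in ball (0 : E) 1, ‖x‖ₑ ^ a ∂μ ≠ ⊤ := by
  have hball : ball (0 : E) 1 = (fun x : E => ‖x‖) ⁻¹' Iio 1 := by ext; simp
  rw [hball]
  refine setLIntegral_norm_preimage_rpow_enorm_ne_top μ measurableSet_Iio ?_
  rw [inter_comm, Ioi_inter_Iio, ← integrableOn_Ioc_iff_integrableOn_Ioo,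
    ← intervalIntegrable_iff_integrableOn_Ioc_of_le zero_le_one]
  exact intervalIntegral.intervalIntegrable_rpow' (by linarith)

theorem setLIntegral_unitBall_compl_rpow_enorm_ne_top {a : ℝ} (ha : a < -(finrank ℝ E : ℝ)) :
    ∫⁻ x in (ball (0 : E) 1)ᶜ, ‖x‖ₑ ^ a ∂μ ≠ ⊤ := by
  have hball : (ball (0 : E) 1)ᶜ = (fun x : E => ‖x‖) ⁻¹' Ici 1 := by ext; simp
  rw [hball]
  refine setLIntegral_norm_preimage_rpow_enorm_ne_top μ measurableSet_Ici ?_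
  rw [inter_eq_left.2 (Ici_subset_Ioi.2 one_pos),
    integrableOn_Ici_iff_integrableOn_Ioi]
  exact integrableOn_Ioi_rpow_of_lt (by linarith) one_pos

end PowerIntegrals

section WeightedNorm

variable {α : Type*} [MeasurableSpace α] {μ : Measure α} {w φ ψ : α → ℝ≥0∞} {p : ℝ}

/-- The weighted `L^p` norm `(∫ (φ w)^p dμ)^{1/p}` of a function that is already nonnegative and
extended-valued, so that majorants need no integrability or finiteness side conditions. -/
noncomputable def weightedLpNorm (w : α → ℝ≥0∞) (p : ℝ) (μ : Measure α) (φ : α → ℝ≥0∞) : ℝ≥0∞ :=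
  (∫⁻ x, (φ x * w x) ^ p ∂μ) ^ (1 / p)

theorem weightedLpNorm_rpow (hp : 0 < p) :
    weightedLpNorm w p μ φ ^ p = ∫⁻ x, (φ x * w x) ^ p ∂μ := by
  rw [weightedLpNorm, one_div, ENNReal.rpow_inv_rpow hp.ne']

theorem weightedLpNorm_le_iff (hp : 0 < p) {C : ℝ≥0∞} :
    weightedLpNorm w p μ φ ≤ C ↔ ∫⁻ x, (φ x * w x) ^ p ∂μ ≤ C ^ p := by
  rw [weightedLpNorm, one_div, ENNReal.rpow_inv_le_iff hp]

theorem weightedLpNorm_mono_ae (hp : 0 ≤ p) (h : ∀ᵐ x ∂μ, φ x * w x ≤ ψ x * w x) :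
    weightedLpNorm w p μ φ ≤ weightedLpNorm w p μ ψ := by
  refine ENNReal.rpow_le_rpow (lintegral_mono_ae ?_) (by positivity)
  filter_upwards [h] with x hx
  gcongr

theorem weightedLpNorm_add_le (hw : Measurable w) (hφ : Measurable φ) (hψ : Measurable ψ)
    (hp : 1 ≤ p) :
    weightedLpNorm w p μ (φ + ψ) ≤ weightedLpNorm w p μ φ + weightedLpNorm w p μ ψ := by
  have hMinkowski := ENNReal.lintegral_Lp_add_le (hφ.mul hw).aemeasurable
    (hψ.mul hw).aemeasurable (μ := μ) hp
  simpa only [weightedLpNorm, Pi.add_apply, Pi.mul_apply, add_mul] using hMinkowski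

theorem weightedLpNorm_const_mul (hp : 0 < p) {c : ℝ≥0∞} (hc : c ≠ ⊤) :
    weightedLpNorm w p μ (fun x => c * φ x) = c * weightedLpNorm w p μ φ := by
  simp only [weightedLpNorm, mul_assoc, ENNReal.mul_rpow_of_nonneg c _ hp.le]
  rw [lintegral_const_mul' _ _ (ENNReal.rpow_ne_top_of_nonneg hp.le hc),
    ENNReal.mul_rpow_of_nonneg _ _ (by positivity), one_div, ENNReal.rpow_rpow_inv hp.ne']

theorem weightedLpNorm_sq (hp : 0 < p) :
    weightedLpNorm (fun x => w x ^ 2) (p / 2) μ (fun x => φ x ^ 2) =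
      weightedLpNorm w p μ φ ^ 2 := by
  have hsq (a : ℝ≥0∞) : (a ^ 2) ^ (p / 2) = a ^ p := by
    rw [← ENNReal.rpow_natCast_mul]; congr 1; push_cast; ring
  simp only [weightedLpNorm, ← mul_pow, hsq]
  rw [← ENNReal.rpow_mul_natCast]
  congr 1
  push_cast
  field_simp

theorem weightedLpNorm_sqrt_mul_le (hw : Measurable w) (hφ : Measurable φ) (hψ : Measurable ψ)
    (hp : 0 < p) :
    weightedLpNorm w p μ (fun x => φ x ^ (2⁻¹ : ℝ) * ψ x ^ (2⁻¹ : ℝ)) ≤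
      weightedLpNorm w p μ φ ^ (2⁻¹ : ℝ) * weightedLpNorm w p μ ψ ^ (2⁻¹ : ℝ) := by
  have hsplit (a b c : ℝ≥0∞) : (a ^ (2⁻¹ : ℝ) * b ^ (2⁻¹ : ℝ) * c) ^ p =
      ((a * c) ^ p) ^ (2⁻¹ : ℝ) * ((b * c) ^ p) ^ (2⁻¹ : ℝ) := by
    have hc : c = c ^ (2⁻¹ : ℝ) * c ^ (2⁻¹ : ℝ) := by
      rw [← ENNReal.rpow_add_of_nonneg _ _ (by norm_num) (by norm_num), ← two_mul,
        mul_inv_cancel₀ two_ne_zero, ENNReal.rpow_one]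
    conv_lhs => rw [hc, mul_mul_mul_comm]
    rw [← ENNReal.rpow_mul, ← ENNReal.rpow_mul, mul_comm p, ENNReal.rpow_mul, ENNReal.rpow_mul,
      ← ENNReal.mul_rpow_of_nonneg _ _ hp.le, ENNReal.mul_rpow_of_nonneg a c (by norm_num),
      ENNReal.mul_rpow_of_nonneg b c (by norm_num)]
  have hCauchySchwarz := ENNReal.lintegral_mul_le_Lp_mul_Lq μ .two_two
    (f := fun x => ((φ x * w x) ^ p) ^ (2⁻¹ : ℝ)) (g := fun x => ((ψ x * w x) ^ p) ^ (2⁻¹ : ℝ))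
    (by fun_prop) (by fun_prop)
  simp only [Pi.mul_apply, ENNReal.rpow_inv_rpow two_ne_zero, one_div] at hCauchySchwarz
  rw [weightedLpNorm_le_iff hp, ENNReal.mul_rpow_of_nonneg _ _ hp.le, ← ENNReal.rpow_mul,
    ← ENNReal.rpow_mul, mul_comm _ p, ENNReal.rpow_mul, ENNReal.rpow_mul, weightedLpNorm_rpow hp,
    weightedLpNorm_rpow hp]
  simpa only [hsplit] using hCauchySchwarz

theorem ae_ne_top_of_weightedLpNorm_ne_top (hw : Measurable w) (hφ : Measurable φ) (hp : 0 < p)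
    (hw0 : ∀ᵐ x ∂μ, w x ≠ 0) (h : weightedLpNorm w p μ φ ≠ ⊤) : ∀ᵐ x ∂μ, φ x ≠ ⊤ := by
  have hint : ∫⁻ x, (φ x * w x) ^ p ∂μ ≠ ⊤ := by
    rw [← weightedLpNorm_rpow hp]
    exact ENNReal.rpow_ne_top_of_nonneg hp.le h
  filter_upwards [ae_lt_top (by fun_prop) hint, hw0] with x hx hwx hφx
  rw [hφx, ENNReal.top_mul hwx, ENNReal.top_rpow_of_pos hp] at hx
  exact hx.ne rfl

theorem lintegral_le_weightedLpNorm_mul (hw : Measurable w) (hφ : Measurable φ) (hp : 1 < p)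
    (hw0 : ∀ᵐ x ∂μ, w x ≠ 0) (hw_top : ∀ᵐ x ∂μ, w x ≠ ⊤) :
    ∫⁻ x, φ x ∂μ ≤ weightedLpNorm w p μ φ *
      (∫⁻ x, w x ^ (-(p / (p - 1))) ∂μ) ^ (1 / (p / (p - 1))) := by
  have hsplit : ∫⁻ x, φ x ∂μ = ∫⁻ x, ((fun x => φ x * w x) * fun x => (w x)⁻¹) x ∂μ := by
    refine lintegral_congr_ae ?_
    filter_upwards [hw0, hw_top] with x hx0 hx_top
    rw [Pi.mul_apply, mul_assoc, ENNReal.mul_inv_cancel hx0 hx_top, mul_one]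
  rw [hsplit]
  refine (ENNReal.lintegral_mul_le_Lp_mul_Lq μ (.conjExponent hp) (by fun_prop)
    (by fun_prop)).trans_eq ?_
  simp only [weightedLpNorm, Real.conjExponent, ENNReal.inv_rpow, ENNReal.rpow_neg]

end WeightedNorm

section PowerWeights

variable {E : Type*} [NormedAddCommGroup E] [NormedSpace ℝ E] [MeasurableSpace E] [BorelSpace E]
  [FiniteDimensional ℝ E] (μ : Measure E) [μ.IsAddHaarMeasure]

theorem weightedLpNorm_rpow_enorm_comp_smul {φ : E → ℝ≥0∞} (hφ : Measurable φ) {p : ℝ}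
    (hp : 0 < p) (ν : ℝ) {t : ℝ} (ht : 0 < t) :
    weightedLpNorm (fun x => ‖x‖ₑ ^ ν) p μ (fun x => φ (t • x)) =
      ENNReal.ofReal t ^ (-(finrank ℝ E / p + ν)) *
        weightedLpNorm (fun x => ‖x‖ₑ ^ ν) p μ φ := by
  have ht0 : ENNReal.ofReal t ≠ 0 := (ENNReal.ofReal_pos.2 ht).ne'
  have hweight (x : E) : φ (t • x) * ‖x‖ₑ ^ ν =
      ENNReal.ofReal t ^ (-ν) * (φ (t • x) * ‖t • x‖ₑ ^ ν) := by
    rw [enorm_smul_rpow x ht, mul_left_comm, ← mul_assoc (ENNReal.ofReal t ^ (-ν)),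
      ← ENNReal.rpow_add _ _ ht0 ENNReal.ofReal_ne_top, neg_add_cancel, ENNReal.rpow_zero, one_mul]
  simp only [weightedLpNorm, hweight]
  have hmul (x : E) := ENNReal.mul_rpow_of_nonneg (ENNReal.ofReal t ^ (-ν))
    (φ (t • x) * ‖t • x‖ₑ ^ ν) hp.le
  simp only [hmul]
  rw [lintegral_const_mul _ (by fun_prop),
    lintegral_comp_smul_of_pos μ (f := fun x => (φ x * ‖x‖ₑ ^ ν) ^ p) (by fun_prop) ht,
    ← mul_assoc, ENNReal.mul_rpow_of_nonneg _ _ (by positivity), ← ENNReal.rpow_mul,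
    ← ENNReal.rpow_add _ _ ht0 ENNReal.ofReal_ne_top, ← ENNReal.rpow_mul]
  congr 2
  field_simp
  ring

variable [Nontrivial E] {p ν : ℝ}

theorem setLIntegral_le_weightedLpNorm_rpow_enorm {S : Set E} (hp : 1 < p) {K : ℝ≥0∞} {R : ℝ}
    (hK : ∫⁻ x in S, ‖x‖ₑ ^ (-ν * (p / (p - 1))) ∂μ =
      K * ENNReal.ofReal R ^ (finrank ℝ E + -ν * (p / (p - 1))))
    {φ : E → ℝ≥0∞} (hφ : Measurable φ) :
    ∫⁻ x in S, φ x ∂μ ≤ K ^ (1 / (p / (p - 1))) *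
      weightedLpNorm (fun x => ‖x‖ₑ ^ ν) p (μ.restrict S) φ *
        ENNReal.ofReal R ^ (finrank ℝ E - (finrank ℝ E / p + ν)) := by
  have hp1 : 0 < p - 1 := by linarith
  have hx0 : ∀ᵐ x ∂μ.restrict S, ‖x‖ₑ ≠ 0 := ae_restrict_of_ae (ae_enorm_ne_zero μ)
  have hHolder := lintegral_le_weightedLpNorm_mul (μ := μ.restrict S)
    (w := fun x => ‖x‖ₑ ^ ν) (by fun_prop) hφ hp
    (by filter_upwards [hx0] with x hx using
      (ENNReal.rpow_pos (pos_iff_ne_zero.2 hx) enorm_ne_top).ne')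
    (by filter_upwards [hx0] with x hx using ENNReal.rpow_ne_top_of_ne_zero hx enorm_ne_top)
  have hexp : ν * -(p / (p - 1)) = -ν * (p / (p - 1)) := by ring
  simp only [← ENNReal.rpow_mul, hexp, hK] at hHolder
  rw [ENNReal.mul_rpow_of_nonneg _ _ (by positivity), ← ENNReal.rpow_mul] at hHolder
  have hR : (finrank ℝ E + -ν * (p / (p - 1))) * (1 / (p / (p - 1))) =
      finrank ℝ E - (finrank ℝ E / p + ν) := by field_simp; ring
  rw [hR] at hHolder
  refine hHolder.trans_eq (by ring)

theorem exists_setLIntegral_ball_le (hp : 1 < p) (hν : finrank ℝ E / p + ν < finrank ℝ E) :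
    ∃ C : ℝ≥0∞, C ≠ ⊤ ∧ ∀ φ : E → ℝ≥0∞, Measurable φ → ∀ R : ℝ, 0 < R →
      ∫⁻ x in ball 0 R, φ x ∂μ ≤ C * weightedLpNorm (fun x => ‖x‖ₑ ^ ν) p μ φ *
        ENNReal.ofReal R ^ (finrank ℝ E - (finrank ℝ E / p + ν)) := by
  have hp1 : 0 < p - 1 := by linarith
  have hexp : -(finrank ℝ E : ℝ) < -ν * (p / (p - 1)) := by
    have : -ν * (p / (p - 1)) + finrank ℝ E =
      (finrank ℝ E - (finrank ℝ E / p + ν)) * (p / (p - 1)) := by field_simp; ring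
    have : 0 < (finrank ℝ E - (finrank ℝ E / p + ν)) * (p / (p - 1)) :=
      mul_pos (by linarith) (by positivity)
    linarith
  refine ⟨(∫⁻ x in ball (0 : E) 1, ‖x‖ₑ ^ (-ν * (p / (p - 1))) ∂μ) ^ (1 / (p / (p - 1))),
    ENNReal.rpow_ne_top_of_nonneg (by positivity)
      (setLIntegral_unitBall_rpow_enorm_ne_top μ hexp), fun φ hφ R hR => ?_⟩
  have hrestrict : weightedLpNorm (fun x => ‖x‖ₑ ^ ν) p (μ.restrict (ball 0 R)) φ ≤
      weightedLpNorm (fun x => ‖x‖ₑ ^ ν) p μ φ :=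
    ENNReal.rpow_le_rpow (setLIntegral_le_lintegral _ _) (by positivity)
  refine (setLIntegral_le_weightedLpNorm_rpow_enorm (ν := ν) μ hp
    (setLIntegral_ball_rpow_enorm μ _ hR) hφ).trans ?_
  exact mul_le_mul_left (mul_le_mul_right hrestrict _) _

theorem exists_setLIntegral_ball_compl_le (hp : 1 < p)
    (hν : finrank ℝ E < finrank ℝ E / p + ν) :
    ∃ C : ℝ≥0∞, C ≠ ⊤ ∧ ∀ φ : E → ℝ≥0∞, Measurable φ → ∀ R : ℝ, 0 < R →
      ∫⁻ x in (ball 0 R)ᶜ, φ x ∂μ ≤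
        C * weightedLpNorm (fun x => ‖x‖ₑ ^ ν) p (μ.restrict (ball 0 R)ᶜ) φ *
          ENNReal.ofReal R ^ (finrank ℝ E - (finrank ℝ E / p + ν)) := by
  have hp1 : 0 < p - 1 := by linarith
  have hexp : -ν * (p / (p - 1)) < -(finrank ℝ E : ℝ) := by
    have : -ν * (p / (p - 1)) + finrank ℝ E =
      -((finrank ℝ E / p + ν - finrank ℝ E) * (p / (p - 1))) := by field_simp; ring
    have : 0 < (finrank ℝ E / p + ν - finrank ℝ E) * (p / (p - 1)) :=
      mul_pos (by linarith) (by positivity)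
    linarith
  exact ⟨_, ENNReal.rpow_ne_top_of_nonneg (by positivity)
    (setLIntegral_unitBall_compl_rpow_enorm_ne_top μ hexp), fun φ hφ R hR =>
    setLIntegral_le_weightedLpNorm_rpow_enorm μ hp (setLIntegral_ball_compl_rpow_enorm μ _ hR) hφ⟩

theorem exists_setLIntegral_ball_compl_sq_le (hp : 2 < p)
    (hν : finrank ℝ E < 2 * (finrank ℝ E / p + ν)) :
    ∃ C : ℝ≥0∞, C ≠ ⊤ ∧ ∀ φ : E → ℝ≥0∞, Measurable φ → ∀ R : ℝ, 0 < R →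
      ∫⁻ x in (ball 0 R)ᶜ, φ x ^ 2 ∂μ ≤
        C * weightedLpNorm (fun x => ‖x‖ₑ ^ ν) p (μ.restrict (ball 0 R)ᶜ) φ ^ 2 *
          ENNReal.ofReal R ^ (finrank ℝ E - 2 * (finrank ℝ E / p + ν)) := by
  have hs : finrank ℝ E / (p / 2) + ν * 2 = 2 * (finrank ℝ E / p + ν) := by field_simp
  obtain ⟨C, hC, hbound⟩ := exists_setLIntegral_ball_compl_le μ (p := p / 2) (ν := ν * 2)
    (by linarith) (by rw [hs]; exact hν)
  refine ⟨C, hC, fun φ hφ R hR => (hbound _ (hφ.pow_const 2) R hR).trans_eq ?_⟩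
  have hweight (x : E) : ‖x‖ₑ ^ (ν * 2) = (‖x‖ₑ ^ ν) ^ 2 := by
    exact_mod_cast ENNReal.rpow_mul_natCast ‖x‖ₑ ν 2
  simp only [hs, hweight]
  rw [weightedLpNorm_sq (by linarith)]

end PowerWeights

section HalfNorm

variable {E : Type*} [NormedAddCommGroup E] {x y : E}

theorem norm_lt_norm_neg_add_of_norm_lt_half (h : ‖y‖ < ‖x‖ / 2) : ‖y‖ < ‖-y + x‖ := by
  have hlower : ‖x‖ - ‖y‖ ≤ ‖-y + x‖ := neg_add_eq_sub y x ▸ norm_sub_norm_le x y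
  linarith

theorem rpow_enorm_le_rpow_enorm_neg_add (hx : x ≠ 0) (h : ‖y‖ < ‖x‖ / 2) (a : ℝ) :
    ‖x‖ₑ ^ a ≤ 2 ^ |a| * ‖-y + x‖ₑ ^ a := by
  have hdouble {u v : E} (h : ‖u‖ ≤ 2 * ‖v‖) : ‖u‖ₑ ≤ 2 * ‖v‖ₑ := by
    rw [← ofReal_norm, ← ofReal_norm, ← ENNReal.ofReal_ofNat 2,
      ← ENNReal.ofReal_mul zero_le_two]
    exact ENNReal.ofReal_le_ofReal h
  have hlower : ‖x‖ - ‖y‖ ≤ ‖-y + x‖ := neg_add_eq_sub y x ▸ norm_sub_norm_le x y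
  have hupper : ‖-y + x‖ ≤ ‖y‖ + ‖x‖ := norm_neg y ▸ norm_add_le (-y) x
  exact rpow_le_two_rpow_abs_mul (hdouble (by linarith)) (hdouble (by linarith))
    (enorm_ne_zero.2 hx) a

end HalfNorm

theorem measurable_setLIntegral_prodMk_preimage {α β : Type*} [MeasurableSpace α]
    [MeasurableSpace β] (μ : Measure β) [SFinite μ] {S : Set (α × β)} (hS : MeasurableSet S)
    {F : α × β → ℝ≥0∞} (hF : Measurable F) :
    Measurable fun x => ∫⁻ y in Prod.mk x ⁻¹' S, F (x, y) ∂μ := by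
  have h := (hF.indicator hS).lintegral_prod_right' (ν := μ)
  simp only [← lintegral_indicator (measurable_prodMk_left hS)]
  exact h

section NearConvolution

variable {E : Type*} [NormedAddCommGroup E] [MeasurableSpace E] (μ : Measure E)
  {φ ψ : E → ℝ≥0∞}

theorem setLIntegral_ball_norm_mul_rpow_enorm_le {C : ℝ≥0∞} {a : ℝ}
    (hC : ∀ R : ℝ, 0 < R → ∫⁻ y in ball 0 R, φ y ∂μ ≤ C * ENNReal.ofReal R ^ a) (z : E) (e : ℝ) :
    (∫⁻ y in ball 0 ‖z‖, φ y ∂μ) * ‖z‖ₑ ^ e ≤ C * ‖z‖ₑ ^ (e + a) := by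
  rcases eq_or_ne z 0 with rfl | hz
  · simp
  · rw [ENNReal.rpow_add _ _ (enorm_ne_zero.2 hz) enorm_ne_top]
    refine (mul_le_mul_left (hC _ (norm_pos_iff.2 hz)) _).trans_eq ?_
    rw [ofReal_norm]
    ring

variable [BorelSpace E]

/-- The part of the convolution `φ ⋆ ψ` at `x` in which the argument of `φ` is small compared to
`x`. -/
noncomputable def nearConvolution (φ ψ : E → ℝ≥0∞) (x : E) : ℝ≥0∞ :=
  ∫⁻ y in ball 0 (‖x‖ / 2), φ y * ψ (-y + x) ∂μ

/-- The mass of `φ ^ 2` away from the origin, at distances at least comparable to `‖x‖`. -/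
noncomputable def sqTail (φ : E → ℝ≥0∞) (x : E) : ℝ≥0∞ :=
  ∫⁻ y in (ball 0 (‖x‖ / 2))ᶜ, φ y ^ 2 ∂μ

theorem measurableSet_snd_mem_ball_half_norm_fst [SecondCountableTopology E] :
    MeasurableSet {q : E × E | q.2 ∈ ball 0 (‖q.1‖ / 2)} := by
  simpa only [mem_ball_zero_iff] using
    measurableSet_lt measurable_snd.norm (measurable_fst.norm.div_const 2)

theorem measurable_nearConvolution [SecondCountableTopology E] [SFinite μ] (hφ : Measurable φ)
    (hψ : Measurable ψ) : Measurable (nearConvolution μ φ ψ) :=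
  measurable_setLIntegral_prodMk_preimage μ measurableSet_snd_mem_ball_half_norm_fst
    (F := fun q => φ q.2 * ψ (-q.2 + q.1)) (by fun_prop)

theorem measurable_sqTail [SecondCountableTopology E] [SFinite μ] (hφ : Measurable φ) :
    Measurable (sqTail μ φ) :=
  measurable_setLIntegral_prodMk_preimage μ measurableSet_snd_mem_ball_half_norm_fst.compl
    (F := fun q => φ q.2 ^ 2) (by fun_prop)

theorem nearConvolution_mul_rpow_le (hφ : Measurable φ) (hψ : Measurable ψ) {p ν : ℝ} (hp : 1 < p)
    {C : ℝ≥0∞} {a : ℝ} (ha : 0 ≤ a)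
    (hC : ∀ R : ℝ, 0 < R → ∫⁻ y in ball 0 R, φ y ∂μ ≤ C * ENNReal.ofReal R ^ a)
    {x : E} (hx : x ≠ 0) :
    (nearConvolution μ φ ψ x * ‖x‖ₑ ^ (ν - a)) ^ p ≤
      C ^ (p - 1) * ∫⁻ y in ball 0 (‖x‖ / 2),
        ‖x‖ₑ ^ (ν * p - a) * (φ y * ψ (-y + x) ^ p) ∂μ := by
  have hp1 : 0 < p - 1 := sub_pos.2 hp
  have hmass : ∫⁻ y in ball 0 (‖x‖ / 2), φ y ∂μ ≤ C * ‖x‖ₑ ^ a := by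
    refine (hC _ (by positivity)).trans ?_
    rw [← ofReal_norm]
    gcongr
    exact half_le_self (norm_nonneg x)
  have hweight : (‖x‖ₑ ^ a) ^ (p - 1) * (‖x‖ₑ ^ (ν - a)) ^ p = ‖x‖ₑ ^ (ν * p - a) := by
    rw [← ENNReal.rpow_mul, ← ENNReal.rpow_mul,
      ← ENNReal.rpow_add _ _ (enorm_ne_zero.2 hx) enorm_ne_top]
    ring_nf
  calc (nearConvolution μ φ ψ x * ‖x‖ₑ ^ (ν - a)) ^ p
      ≤ (∫⁻ y in ball 0 (‖x‖ / 2), φ y ∂μ) ^ (p - 1) *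
          (∫⁻ y in ball 0 (‖x‖ / 2), φ y * ψ (-y + x) ^ p ∂μ) * (‖x‖ₑ ^ (ν - a)) ^ p := by
        rw [ENNReal.mul_rpow_of_nonneg _ _ (by linarith)]
        gcongr
        exact lintegral_mul_rpow_le hφ (by fun_prop) hp
    _ ≤ (C * ‖x‖ₑ ^ a) ^ (p - 1) *
          (∫⁻ y in ball 0 (‖x‖ / 2), φ y * ψ (-y + x) ^ p ∂μ) * (‖x‖ₑ ^ (ν - a)) ^ p := by
        gcongr
    _ = C ^ (p - 1) * ∫⁻ y in ball 0 (‖x‖ / 2),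
          ‖x‖ₑ ^ (ν * p - a) * (φ y * ψ (-y + x) ^ p) ∂μ := by
        rw [ENNReal.mul_rpow_of_nonneg _ _ hp1.le, lintegral_const_mul _ (by fun_prop), ← hweight]
        ring

theorem setLIntegral_ball_half_norm_rpow_enorm_mul_le (x : E) (e : ℝ) :
    ∫⁻ y in ball 0 (‖x‖ / 2), ‖x‖ₑ ^ e * (φ y * ψ (-y + x)) ∂μ ≤
      2 ^ |e| * ∫⁻ y, (ball 0 ‖-y + x‖).indicator φ y * (ψ (-y + x) * ‖-y + x‖ₑ ^ e) ∂μ := by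
  rw [← lintegral_const_mul' _ _
    (ENNReal.rpow_ne_top_of_nonneg (abs_nonneg _) ENNReal.ofNat_ne_top)]
  refine (setLIntegral_mono' measurableSet_ball fun y hy => ?_).trans
    (setLIntegral_le_lintegral _ _)
  rw [mem_ball_zero_iff] at hy
  have hx : x ≠ 0 := by rintro rfl; simp [(norm_nonneg y).not_gt] at hy
  rw [indicator_of_mem (mem_ball_zero_iff.2 (norm_lt_norm_neg_add_of_norm_lt_half hy))]
  exact (mul_le_mul_left (rpow_enorm_le_rpow_enorm_neg_add hx hy _) _).trans_eq (by ring)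

end NearConvolution

section WeightedConvolution

variable {E : Type*} [NormedAddCommGroup E] [NormedSpace ℝ E] [MeasurableSpace E] [BorelSpace E]
  [FiniteDimensional ℝ E] (μ : Measure E) [μ.IsAddHaarMeasure] {φ ψ : E → ℝ≥0∞} {p ν : ℝ}

-- Off the two near regions both arguments have norm at least `‖x‖ / 2`, so Cauchy–Schwarz bounds
-- what remains by the two tails.
theorem lconvolution_le_near_add_near_add_tail (hφ : Measurable φ) (hψ : Measurable ψ) (x : E) :
    (φ ⋆ₗ[μ] ψ) x ≤ nearConvolution μ φ ψ x + nearConvolution μ ψ φ x +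
      sqTail μ φ x ^ (2⁻¹ : ℝ) * sqTail μ ψ x ^ (2⁻¹ : ℝ) := by
  set B : Set E := ball 0 (‖x‖ / 2)
  have hB : MeasurableSet B := measurableSet_ball
  have hreflect {f : E → ℝ≥0∞} (hf : Measurable f) {S : Set E} (hS : MeasurableSet S) :
      ∫⁻ y in (fun y => -y + x) ⁻¹' S, f (-y + x) ∂μ = ∫⁻ y in S, f y ∂μ := by
    simpa only [neg_add_eq_sub] using
      (Measure.measurePreserving_sub_left μ x).setLIntegral_comp_preimage hS hf
  have hnear : ∫⁻ y in (fun y => -y + x) ⁻¹' B, φ y * ψ (-y + x) ∂μ =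
      nearConvolution μ ψ φ x := by
    rw [nearConvolution, ← hreflect (by fun_prop) hB]
    simp only [neg_add_eq_sub, sub_sub_cancel, mul_comm]
  have htail : ∫⁻ y in Bᶜ ∩ (fun y => -y + x) ⁻¹' Bᶜ, φ y * ψ (-y + x) ∂μ ≤
      sqTail μ φ x ^ (2⁻¹ : ℝ) * sqTail μ ψ x ^ (2⁻¹ : ℝ) := by
    refine (ENNReal.lintegral_mul_le_Lp_mul_Lq _ .two_two (f := φ) (g := fun y => ψ (-y + x))
      (by fun_prop) (by fun_prop)).trans ?_
    simp only [one_div, ENNReal.rpow_ofNat]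
    rw [sqTail, sqTail, ← hreflect (hψ.pow_const 2) hB.compl]
    gcongr
    · exact inter_subset_left
    · exact inter_subset_right
  rw [lconvolution_def, ← lintegral_add_compl _ hB, add_assoc, ← hnear]
  gcongr ?_ + ?_
  · rfl
  · rw [← lintegral_inter_add_sdiff _ Bᶜ (hB.preimage (by fun_prop : Measurable fun y => -y + x))]
    rw [sdiff_eq]
    exact add_le_add (lintegral_mono_set inter_subset_right) htail

theorem lintegral_lintegral_neg_add {K : E × E → ℝ≥0∞} (hK : Measurable K) :
    ∫⁻ x, ∫⁻ y, K (y, -y + x) ∂μ ∂μ = ∫⁻ z, ∫⁻ y, K (y, z) ∂μ ∂μ := by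
  rw [lintegral_lintegral_swap (f := fun x y => K (y, -y + x)) (by fun_prop),
    lintegral_lintegral_swap (f := fun z y => K (y, z)) (by fun_prop)]
  exact lintegral_congr fun y => lintegral_add_left_eq_self (fun z => K (y, z)) (-y)

theorem lintegral_setLIntegral_ball_half_norm_le (hφ : Measurable φ) (hψ : Measurable ψ)
    {C : ℝ≥0∞} {a : ℝ}
    (hC : ∀ R : ℝ, 0 < R → ∫⁻ y in ball 0 R, φ y ∂μ ≤ C * ENNReal.ofReal R ^ a) (e : ℝ) :
    ∫⁻ x, ∫⁻ y in ball 0 (‖x‖ / 2), ‖x‖ₑ ^ e * (φ y * ψ (-y + x)) ∂μ ∂μ ≤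
      C * 2 ^ |e| * ∫⁻ z, ψ z * ‖z‖ₑ ^ (e + a) ∂μ := by
  have htwo : (2 : ℝ≥0∞) ^ |e| ≠ ⊤ :=
    ENNReal.rpow_ne_top_of_nonneg (abs_nonneg _) ENNReal.ofNat_ne_top
  set K : E × E → ℝ≥0∞ := fun q => (ball 0 ‖q.2‖).indicator φ q.1 * (ψ q.2 * ‖q.2‖ₑ ^ e)
  have hK : Measurable K := by
    have hset : MeasurableSet {q : E × E | q.1 ∈ ball 0 ‖q.2‖} := by
      simpa only [mem_ball_zero_iff] using
        measurableSet_lt measurable_fst.norm measurable_snd.norm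
    exact ((hφ.comp measurable_fst).indicator hset).mul (by fun_prop)
  calc ∫⁻ x, ∫⁻ y in ball 0 (‖x‖ / 2), ‖x‖ₑ ^ e * (φ y * ψ (-y + x)) ∂μ ∂μ
      ≤ ∫⁻ x, 2 ^ |e| * ∫⁻ y, K (y, -y + x) ∂μ ∂μ :=
        lintegral_mono fun x => setLIntegral_ball_half_norm_rpow_enorm_mul_le μ x e
    _ = 2 ^ |e| * ∫⁻ z, ∫⁻ y, K (y, z) ∂μ ∂μ := by
        rw [lintegral_const_mul' _ _ htwo, lintegral_lintegral_neg_add μ hK]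
    _ ≤ 2 ^ |e| * ∫⁻ z, C * (ψ z * ‖z‖ₑ ^ (e + a)) ∂μ := by
        gcongr with z
        simp only [K]
        rw [lintegral_mul_const _ (hφ.indicator measurableSet_ball),
          lintegral_indicator measurableSet_ball, mul_left_comm, mul_left_comm C]
        exact mul_le_mul_right (setLIntegral_ball_norm_mul_rpow_enorm_le μ hC z e) _
    _ = C * 2 ^ |e| * ∫⁻ z, ψ z * ‖z‖ₑ ^ (e + a) ∂μ := by
        rw [lintegral_const_mul _ (by fun_prop)]
        ring

variable [Nontrivial E]

theorem weightedLpNorm_nearConvolution_le (hφ : Measurable φ) (hψ : Measurable ψ) (hp : 1 < p)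
    {C : ℝ≥0∞} {a : ℝ} (ha : 0 ≤ a)
    (hC : ∀ R : ℝ, 0 < R → ∫⁻ y in ball 0 R, φ y ∂μ ≤ C * ENNReal.ofReal R ^ a) :
    weightedLpNorm (fun x => ‖x‖ₑ ^ (ν - a)) p μ (nearConvolution μ φ ψ) ≤
      C * (2 ^ |ν * p - a|) ^ (1 / p) * weightedLpNorm (fun x => ‖x‖ₑ ^ ν) p μ ψ := by
  have hp0 : 0 < p := one_pos.trans hp
  have hψ_norm : ∫⁻ z, ψ z ^ p * ‖z‖ₑ ^ (ν * p - a + a) ∂μ =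
      weightedLpNorm (fun x => ‖x‖ₑ ^ ν) p μ ψ ^ p := by
    rw [weightedLpNorm_rpow hp0, sub_add_cancel]
    simp only [ENNReal.mul_rpow_of_nonneg _ _ hp0.le, ENNReal.rpow_mul]
  rw [weightedLpNorm_le_iff hp0]
  calc ∫⁻ x, (nearConvolution μ φ ψ x * ‖x‖ₑ ^ (ν - a)) ^ p ∂μ
      ≤ ∫⁻ x, C ^ (p - 1) * ∫⁻ y in ball 0 (‖x‖ / 2),
          ‖x‖ₑ ^ (ν * p - a) * (φ y * ψ (-y + x) ^ p) ∂μ ∂μ := by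
        refine lintegral_mono_ae ?_
        filter_upwards [ae_enorm_ne_zero μ] with x hx
        exact nearConvolution_mul_rpow_le μ hφ hψ hp ha hC (enorm_ne_zero.1 hx)
    _ ≤ C ^ (p - 1) * (C * 2 ^ |ν * p - a| * weightedLpNorm (fun x => ‖x‖ₑ ^ ν) p μ ψ ^ p) := by
        rw [lintegral_const_mul, ← hψ_norm]
        · gcongr
          exact lintegral_setLIntegral_ball_half_norm_le μ hφ (hψ.pow_const p) hC _
        · exact measurable_setLIntegral_prodMk_preimage μ measurableSet_snd_mem_ball_half_norm_fst
            (F := fun q => ‖q.1‖ₑ ^ (ν * p - a) * (φ q.2 * ψ (-q.2 + q.1) ^ p)) (by fun_prop)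
    _ = (C * (2 ^ |ν * p - a|) ^ (1 / p) * weightedLpNorm (fun x => ‖x‖ₑ ^ ν) p μ ψ) ^ p := by
        rw [ENNReal.mul_rpow_of_nonneg _ _ hp0.le, ENNReal.mul_rpow_of_nonneg _ _ hp0.le, one_div,
          ENNReal.rpow_inv_rpow hp0.ne', ← mul_assoc, ← mul_assoc]
        conv_rhs => rw [← sub_add_cancel p 1,
          ENNReal.rpow_add_of_nonneg _ _ (sub_nonneg.2 hp.le) zero_le_one, ENNReal.rpow_one]
        rw [sub_add_cancel]

theorem exists_weightedLpNorm_nearConvolution_le (hp : 1 < p)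
    (hν : finrank ℝ E / p + ν < finrank ℝ E) :
    ∃ C : ℝ≥0∞, C ≠ ⊤ ∧ ∀ φ ψ : E → ℝ≥0∞, Measurable φ → Measurable ψ →
      weightedLpNorm (fun x => ‖x‖ₑ ^ (ν - (finrank ℝ E - (finrank ℝ E / p + ν)))) p μ
        (nearConvolution μ φ ψ) ≤ C * (weightedLpNorm (fun x => ‖x‖ₑ ^ ν) p μ φ *
          weightedLpNorm (fun x => ‖x‖ₑ ^ ν) p μ ψ) := by
  obtain ⟨C, hC, hball⟩ := exists_setLIntegral_ball_le μ hp hν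
  have htwo (b : ℝ) : ((2 : ℝ≥0∞) ^ |b|) ^ (1 / p) ≠ ⊤ := ENNReal.rpow_ne_top_of_nonneg
    (by positivity) (ENNReal.rpow_ne_top_of_nonneg (abs_nonneg _) ENNReal.ofNat_ne_top)
  refine ⟨C * (2 ^ |ν * p - (finrank ℝ E - (finrank ℝ E / p + ν))|) ^ (1 / p),
    ENNReal.mul_ne_top hC (htwo _), fun φ ψ hφ hψ => ?_⟩
  refine (weightedLpNorm_nearConvolution_le μ hφ hψ hp (sub_nonneg.2 hν.le)
    (hball φ hφ)).trans_eq ?_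
  ring

end WeightedConvolution

section TailWeights

variable {E : Type*} [NormedAddCommGroup E] [MeasurableSpace E] [BorelSpace E] (μ : Measure E)
  {p ν : ℝ}

theorem weightedLpNorm_ball_compl_rpow_enorm_sub_le {φ : E → ℝ≥0∞} (hp : 0 < p) {δ : ℝ}
    (hδ : 0 ≤ δ) {R : ℝ} (hR : 0 < R) :
    weightedLpNorm (fun x => ‖x‖ₑ ^ (ν - δ)) p (μ.restrict (ball 0 R)ᶜ) φ ≤
      ENNReal.ofReal R ^ (-δ) * weightedLpNorm (fun x => ‖x‖ₑ ^ ν) p μ φ := by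
  have hR_top : ENNReal.ofReal R ^ (-δ) ≠ ⊤ :=
    ENNReal.rpow_ne_top_of_ne_zero (ENNReal.ofReal_pos.2 hR).ne' ENNReal.ofReal_ne_top
  rw [weightedLpNorm_le_iff hp, ENNReal.mul_rpow_of_nonneg _ _ hp.le, weightedLpNorm_rpow hp,
    ← lintegral_const_mul' _ _ (ENNReal.rpow_ne_top_of_nonneg hp.le hR_top)]
  refine (setLIntegral_mono' measurableSet_ball.compl fun x hx => ?_).trans
    (setLIntegral_le_lintegral _ _)
  have hRx : ENNReal.ofReal R ≤ ‖x‖ₑ := by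
    rw [← ofReal_norm]
    exact ENNReal.ofReal_le_ofReal (by simpa using hx)
  have hx0 : ‖x‖ₑ ≠ 0 := ((ENNReal.ofReal_pos.2 hR).trans_le hRx).ne'
  rw [← ENNReal.mul_rpow_of_nonneg _ _ hp.le, sub_eq_neg_add,
    ENNReal.rpow_add _ _ hx0 enorm_ne_top, mul_left_comm]
  gcongr ?_ ^ p
  refine mul_le_mul_left ?_ _
  rw [ENNReal.rpow_neg, ENNReal.rpow_neg]
  gcongr

variable [NormedSpace ℝ E]

theorem sqTail_mul_rpow_enorm_le (hp : 0 < p) {δ : ℝ} (hδ : 0 ≤ δ) {C : ℝ≥0∞} {φ : E → ℝ≥0∞}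
    (hC : ∀ R : ℝ, 0 < R → ∫⁻ y in (ball 0 R)ᶜ, φ y ^ 2 ∂μ ≤
      C * weightedLpNorm (fun y => ‖y‖ₑ ^ (ν - δ)) p (μ.restrict (ball 0 R)ᶜ) φ ^ 2 *
        ENNReal.ofReal R ^ (finrank ℝ E - 2 * (finrank ℝ E / p + (ν - δ))))
    {x : E} (hx : x ≠ 0) :
    sqTail μ φ x * ‖x‖ₑ ^ (ν - (finrank ℝ E - (finrank ℝ E / p + ν))) ≤
      C * ENNReal.ofReal 2⁻¹ ^ (finrank ℝ E - 2 * (finrank ℝ E / p + (ν - δ)) - δ) *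
        weightedLpNorm (fun y => ‖y‖ₑ ^ ν) p μ φ * (‖x‖ₑ ^ (δ - finrank ℝ E / p) *
          weightedLpNorm (fun y => ‖y‖ₑ ^ (ν - δ)) p (μ.restrict (ball 0 (‖x‖ / 2))ᶜ) φ) := by
  have hx0 : ‖x‖ₑ ≠ 0 := enorm_ne_zero.2 hx
  have hr : 0 < ‖x‖ / 2 := half_pos (norm_pos_iff.2 hx)
  have hr0 : ENNReal.ofReal (‖x‖ / 2) ≠ 0 := (ENNReal.ofReal_pos.2 hr).ne'
  set N := weightedLpNorm (fun y => ‖y‖ₑ ^ ν) p μ φ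
  set M := weightedLpNorm (fun y => ‖y‖ₑ ^ (ν - δ)) p (μ.restrict (ball 0 (‖x‖ / 2))ᶜ) φ
  set e : ℝ := finrank ℝ E - 2 * (finrank ℝ E / p + (ν - δ)) with he
  set k : ℝ := ν - (finrank ℝ E - (finrank ℝ E / p + ν)) with hk
  have hM : M ≤ ENNReal.ofReal (‖x‖ / 2) ^ (-δ) * N :=
    weightedLpNorm_ball_compl_rpow_enorm_sub_le μ hp hδ hr
  have hscale : ENNReal.ofReal (‖x‖ / 2) ^ (e - δ) =
      ENNReal.ofReal 2⁻¹ ^ (e - δ) * ‖x‖ₑ ^ (e - δ) := by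
    rw [div_eq_inv_mul, ENNReal.ofReal_mul (by norm_num), ofReal_norm,
      ENNReal.mul_rpow_of_ne_top ENNReal.ofReal_ne_top enorm_ne_top]
  calc sqTail μ φ x * ‖x‖ₑ ^ k
      ≤ C * (M * M) * ENNReal.ofReal (‖x‖ / 2) ^ e * ‖x‖ₑ ^ k :=
        mul_le_mul_left (sq M ▸ hC _ hr) _
    _ ≤ C * (M * (ENNReal.ofReal (‖x‖ / 2) ^ (-δ) * N)) * ENNReal.ofReal (‖x‖ / 2) ^ e *
          ‖x‖ₑ ^ k := by gcongr
    _ = C * (ENNReal.ofReal (‖x‖ / 2) ^ e * ENNReal.ofReal (‖x‖ / 2) ^ (-δ)) * N *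
          (‖x‖ₑ ^ k * M) := by ring
    _ = C * ENNReal.ofReal 2⁻¹ ^ (e - δ) * N * (‖x‖ₑ ^ (e - δ) * ‖x‖ₑ ^ k * M) := by
        rw [← ENNReal.rpow_add _ _ hr0 ENNReal.ofReal_ne_top, ← sub_eq_add_neg, hscale]
        ring
    _ = C * ENNReal.ofReal 2⁻¹ ^ (e - δ) * N * (‖x‖ₑ ^ (δ - finrank ℝ E / p) * M) := by
        rw [← ENNReal.rpow_add _ _ hx0 enorm_ne_top, he, hk]
        ring_nf

end TailWeights

section TailEstimate

variable {E : Type*} [NormedAddCommGroup E] [NormedSpace ℝ E] [MeasurableSpace E] [BorelSpace E]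
  [FiniteDimensional ℝ E] [Nontrivial E] (μ : Measure E) [μ.IsAddHaarMeasure] {p ν : ℝ}

theorem exists_setLIntegral_half_norm_le_rpow_enorm_le {a : ℝ} (ha : 0 < a) :
    ∃ C : ℝ≥0∞, C ≠ ⊤ ∧ ∀ y : E, y ≠ 0 →
      ∫⁻ x in {x : E | y ∈ (ball 0 (‖x‖ / 2))ᶜ}, ‖x‖ₑ ^ (a - finrank ℝ E) ∂μ ≤ C * ‖y‖ₑ ^ a := by
  refine ⟨(∫⁻ x in ball (0 : E) 1, ‖x‖ₑ ^ (a - finrank ℝ E) ∂μ) * 3 ^ a,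
    ENNReal.mul_ne_top (setLIntegral_unitBall_rpow_enorm_ne_top μ (by linarith))
      (ENNReal.rpow_ne_top_of_nonneg ha.le ENNReal.ofNat_ne_top), fun y hy => ?_⟩
  have hsubset : {x : E | y ∈ (ball 0 (‖x‖ / 2))ᶜ} ⊆ ball 0 (3 * ‖y‖) := fun x hx => by
    simp only [mem_compl_iff, mem_ball_zero_iff, not_lt, mem_ofPred_eq] at hx ⊢
    linarith [norm_pos_iff.2 hy]
  refine (lintegral_mono_set hsubset).trans_eq ?_
  rw [setLIntegral_ball_rpow_enorm μ _ (mul_pos three_pos (norm_pos_iff.2 hy)),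
    ENNReal.ofReal_mul zero_le_three, ofReal_norm, ENNReal.ofReal_ofNat, add_sub_cancel,
    ENNReal.mul_rpow_of_nonneg _ _ ha.le, mul_assoc]

theorem exists_lintegral_rpow_enorm_mul_setLIntegral_compl_ball_le {a : ℝ} (ha : 0 < a) :
    ∃ C : ℝ≥0∞, C ≠ ⊤ ∧ ∀ F : E → ℝ≥0∞, Measurable F →
      ∫⁻ x, ‖x‖ₑ ^ (a - finrank ℝ E) * ∫⁻ y in (ball 0 (‖x‖ / 2))ᶜ, F y ∂μ ∂μ ≤
        C * ∫⁻ y, F y * ‖y‖ₑ ^ a ∂μ := by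
  obtain ⟨C, hC, hinner⟩ := exists_setLIntegral_half_norm_le_rpow_enorm_le μ ha
  refine ⟨C, hC, fun F hF => ?_⟩
  have hS : MeasurableSet {q : E × E | q.2 ∈ (ball 0 (‖q.1‖ / 2))ᶜ} :=
    measurableSet_snd_mem_ball_half_norm_fst.compl
  set K : E × E → ℝ≥0∞ := {q : E × E | q.2 ∈ (ball 0 (‖q.1‖ / 2))ᶜ}.indicator
    fun q => ‖q.1‖ₑ ^ (a - finrank ℝ E) * F q.2
  have hK : Measurable K := Measurable.indicator (by fun_prop) hS
  calc ∫⁻ x, ‖x‖ₑ ^ (a - finrank ℝ E) * ∫⁻ y in (ball 0 (‖x‖ / 2))ᶜ, F y ∂μ ∂μ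
      = ∫⁻ x, ∫⁻ y, K (x, y) ∂μ ∂μ := lintegral_congr fun x => by
        rw [← lintegral_const_mul _ hF, ← lintegral_indicator measurableSet_ball.compl]
        rfl
    _ = ∫⁻ y, ∫⁻ x, K (x, y) ∂μ ∂μ := lintegral_lintegral_swap (by fun_prop)
    _ = ∫⁻ y, (∫⁻ x in {x : E | y ∈ (ball 0 (‖x‖ / 2))ᶜ}, ‖x‖ₑ ^ (a - finrank ℝ E) ∂μ) * F y ∂μ :=
        lintegral_congr fun y => by
        rw [← lintegral_mul_const _ (by fun_prop),
          ← lintegral_indicator (show MeasurableSet {x : E | y ∈ (ball 0 (‖x‖ / 2))ᶜ} from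
            hS.preimage measurable_prodMk_right)]
        rfl
    _ ≤ ∫⁻ y, C * (F y * ‖y‖ₑ ^ a) ∂μ := by
        refine lintegral_mono_ae ?_
        filter_upwards [ae_enorm_ne_zero μ] with y hy
        exact (mul_le_mul_left (hinner y (enorm_ne_zero.1 hy)) _).trans_eq (by ring)
    _ = C * ∫⁻ y, F y * ‖y‖ₑ ^ a ∂μ := lintegral_const_mul _ (by fun_prop)

theorem exists_lintegral_rpow_enorm_mul_weightedLpNorm_ball_compl_le (hp : 0 < p) {δ : ℝ}
    (hδ : 0 < δ) :
    ∃ C : ℝ≥0∞, C ≠ ⊤ ∧ ∀ φ : E → ℝ≥0∞, Measurable φ →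
      ∫⁻ x, ‖x‖ₑ ^ (δ * p - finrank ℝ E) *
          weightedLpNorm (fun y => ‖y‖ₑ ^ (ν - δ)) p (μ.restrict (ball 0 (‖x‖ / 2))ᶜ) φ ^ p ∂μ ≤
        C * weightedLpNorm (fun y => ‖y‖ₑ ^ ν) p μ φ ^ p := by
  obtain ⟨C, hC, hHardy⟩ :=
    exists_lintegral_rpow_enorm_mul_setLIntegral_compl_ball_le μ (mul_pos hδ hp)
  refine ⟨C, hC, fun φ hφ => ?_⟩
  simp only [weightedLpNorm_rpow hp]
  refine (hHardy (fun y => (φ y * ‖y‖ₑ ^ (ν - δ)) ^ p) (by fun_prop)).trans_eq ?_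
  congr 1
  refine lintegral_congr_ae ?_
  filter_upwards [ae_enorm_ne_zero μ] with y hy
  rw [ENNReal.rpow_mul, ← ENNReal.mul_rpow_of_nonneg _ _ hp.le, mul_assoc,
    ← ENNReal.rpow_add _ _ hy enorm_ne_top, sub_add_cancel]

theorem exists_weightedLpNorm_sqTail_le (hp : 2 < p)
    (hν : finrank ℝ E < 2 * (finrank ℝ E / p + ν)) :
    ∃ C : ℝ≥0∞, C ≠ ⊤ ∧ ∀ φ : E → ℝ≥0∞, Measurable φ →
      weightedLpNorm (fun x => ‖x‖ₑ ^ (ν - (finrank ℝ E - (finrank ℝ E / p + ν)))) p μ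
        (sqTail μ φ) ≤ C * weightedLpNorm (fun x => ‖x‖ₑ ^ ν) p μ φ ^ 2 := by
  -- Lowering one factor's weight by `δ` makes the outer integral `∫ |x|^(δp-d) dx` converge at `0`.
  obtain ⟨δ, hδ, hδν⟩ : ∃ δ : ℝ, 0 < δ ∧
      finrank ℝ E < 2 * (finrank ℝ E / p + (ν - δ)) :=
    ⟨(2 * (finrank ℝ E / p + ν) - finrank ℝ E) / 4, by linarith, by linarith⟩
  have hp0 : 0 < p := by linarith
  obtain ⟨C, hC, htail⟩ := exists_setLIntegral_ball_compl_sq_le μ hp hδν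
  obtain ⟨H, hH, hHardy⟩ :=
    exists_lintegral_rpow_enorm_mul_weightedLpNorm_ball_compl_le μ (ν := ν) hp0 hδ
  set D := C * ENNReal.ofReal 2⁻¹ ^ (finrank ℝ E - 2 * (finrank ℝ E / p + (ν - δ)) - δ)
  have hD : D ≠ ⊤ := ENNReal.mul_ne_top hC
    (ENNReal.rpow_ne_top_of_ne_zero (by simp) ENNReal.ofReal_ne_top)
  refine ⟨D * H ^ (1 / p), ENNReal.mul_ne_top hD
    (ENNReal.rpow_ne_top_of_nonneg (by positivity) hH), fun φ hφ => ?_⟩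
  set N := weightedLpNorm (fun x => ‖x‖ₑ ^ ν) p μ φ
  rw [weightedLpNorm_le_iff hp0]
  calc ∫⁻ x, (sqTail μ φ x * ‖x‖ₑ ^ (ν - (finrank ℝ E - (finrank ℝ E / p + ν)))) ^ p ∂μ
      ≤ ∫⁻ x, (D * N) ^ p * (‖x‖ₑ ^ (δ * p - finrank ℝ E) *
          weightedLpNorm (fun y => ‖y‖ₑ ^ (ν - δ)) p (μ.restrict (ball 0 (‖x‖ / 2))ᶜ) φ ^ p)
            ∂μ := by
        refine lintegral_mono_ae ?_
        filter_upwards [ae_enorm_ne_zero μ] with x hx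
        refine (ENNReal.rpow_le_rpow (sqTail_mul_rpow_enorm_le μ hp0 hδ.le (htail φ hφ)
          (enorm_ne_zero.1 hx)) hp0.le).trans_eq ?_
        rw [ENNReal.mul_rpow_of_nonneg _ _ hp0.le, ENNReal.mul_rpow_of_nonneg (‖x‖ₑ ^ _) _ hp0.le,
          ← ENNReal.rpow_mul, sub_mul, div_mul_cancel₀ _ hp0.ne']
    _ ≤ (D * N) ^ p * (H * N ^ p) := by
        simp only [weightedLpNorm_rpow (μ := μ.restrict _) hp0] at hHardy ⊢
        rw [lintegral_const_mul]
        · exact mul_le_mul_right (hHardy φ hφ) _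
        · exact Measurable.mul (by fun_prop) (measurable_setLIntegral_prodMk_preimage μ
            measurableSet_snd_mem_ball_half_norm_fst.compl
            (F := fun q => (φ q.2 * ‖q.2‖ₑ ^ (ν - δ)) ^ p) (by fun_prop))
    _ = (D * H ^ (1 / p) * N ^ 2) ^ p := by
        simp only [ENNReal.mul_rpow_of_nonneg _ _ hp0.le, one_div, ENNReal.rpow_inv_rpow hp0.ne',
          sq]
        ring

theorem exists_weightedLpNorm_sqrt_sqTail_mul_sqrt_sqTail_le (hp : 2 < p)
    (hν : finrank ℝ E < 2 * (finrank ℝ E / p + ν)) :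
    ∃ C : ℝ≥0∞, C ≠ ⊤ ∧ ∀ φ ψ : E → ℝ≥0∞, Measurable φ → Measurable ψ →
      weightedLpNorm (fun x => ‖x‖ₑ ^ (ν - (finrank ℝ E - (finrank ℝ E / p + ν)))) p μ
        (fun x => sqTail μ φ x ^ (2⁻¹ : ℝ) * sqTail μ ψ x ^ (2⁻¹ : ℝ)) ≤
          C * (weightedLpNorm (fun x => ‖x‖ₑ ^ ν) p μ φ *
            weightedLpNorm (fun x => ‖x‖ₑ ^ ν) p μ ψ) := by
  obtain ⟨C, hC, htail⟩ := exists_weightedLpNorm_sqTail_le μ hp hν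
  refine ⟨C, hC, fun φ ψ hφ hψ => ?_⟩
  set P := weightedLpNorm (fun x => ‖x‖ₑ ^ ν) p μ φ
  set Q := weightedLpNorm (fun x => ‖x‖ₑ ^ ν) p μ ψ
  refine (weightedLpNorm_sqrt_mul_le (by fun_prop) (measurable_sqTail μ hφ)
    (measurable_sqTail μ hψ) (by linarith)).trans ?_
  calc _ ≤ (C * P ^ 2) ^ (2⁻¹ : ℝ) * (C * Q ^ 2) ^ (2⁻¹ : ℝ) := by
        gcongr
        exacts [htail φ hφ, htail ψ hψ]
    _ = ((C * (P * Q)) ^ 2) ^ (2⁻¹ : ℝ) := by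
        rw [← ENNReal.mul_rpow_of_nonneg _ _ (by norm_num)]
        ring_nf
    _ = C * (P * Q) := by
        rw [← ENNReal.rpow_natCast_mul]
        norm_num

theorem exists_weightedLpNorm_lconvolution_le (hp : 2 < p)
    (hν : finrank ℝ E < 2 * (finrank ℝ E / p + ν)) (hν' : finrank ℝ E / p + ν < finrank ℝ E) :
    ∃ C : ℝ≥0∞, C ≠ ⊤ ∧ ∀ φ ψ : E → ℝ≥0∞, Measurable φ → Measurable ψ →
      weightedLpNorm (fun x => ‖x‖ₑ ^ (ν - (finrank ℝ E - (finrank ℝ E / p + ν)))) p μ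
        (φ ⋆ₗ[μ] ψ) ≤ C * (weightedLpNorm (fun x => ‖x‖ₑ ^ ν) p μ φ *
          weightedLpNorm (fun x => ‖x‖ₑ ^ ν) p μ ψ) := by
  obtain ⟨C, hC, hnear⟩ := exists_weightedLpNorm_nearConvolution_le μ (by linarith : 1 < p) hν'
  obtain ⟨D, hD, htail⟩ := exists_weightedLpNorm_sqrt_sqTail_mul_sqrt_sqTail_le μ hp hν
  refine ⟨C + C + D, by finiteness, fun φ ψ hφ hψ => ?_⟩
  set w : E → ℝ≥0∞ := fun x => ‖x‖ₑ ^ (ν - (finrank ℝ E - (finrank ℝ E / p + ν)))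
  have hw : Measurable w := by fun_prop
  set P := weightedLpNorm (fun x => ‖x‖ₑ ^ ν) p μ φ
  set Q := weightedLpNorm (fun x => ‖x‖ₑ ^ ν) p μ ψ
  set T : E → ℝ≥0∞ := fun x => sqTail μ φ x ^ (2⁻¹ : ℝ) * sqTail μ ψ x ^ (2⁻¹ : ℝ)
  have hφψ := measurable_nearConvolution μ hφ hψ
  have hψφ := measurable_nearConvolution μ hψ hφ
  have hTφ := measurable_sqTail μ hφ
  have hTψ := measurable_sqTail μ hψ
  calc weightedLpNorm w p μ (φ ⋆ₗ[μ] ψ)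
      ≤ weightedLpNorm w p μ (nearConvolution μ φ ψ + nearConvolution μ ψ φ + T) :=
        weightedLpNorm_mono_ae (by linarith) (ae_of_all _ fun x =>
          mul_le_mul_left (lconvolution_le_near_add_near_add_tail μ hφ hψ x) _)
    _ ≤ weightedLpNorm w p μ (nearConvolution μ φ ψ) +
          weightedLpNorm w p μ (nearConvolution μ ψ φ) + weightedLpNorm w p μ T := by
        refine (weightedLpNorm_add_le hw (hφψ.add hψφ) (by fun_prop) (by linarith)).trans ?_
        exact add_le_add_left (weightedLpNorm_add_le hw hφψ hψφ (by linarith)) _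
    _ ≤ C * (P * Q) + C * (Q * P) + D * (P * Q) :=
        add_le_add (add_le_add (hnear φ ψ hφ hψ) (hnear ψ φ hψ hφ)) (htail φ ψ hφ hψ)
    _ = (C + C + D) * (P * Q) := by ring

end TailEstimate

section DuhamelSmoothing

theorem rpow_le_exp {u a : ℝ} (hu : 0 ≤ u) (ha0 : 0 ≤ a) (ha1 : a ≤ 1) :
    u ^ a ≤ Real.exp u := by
  have hBernoulli := rpow_one_add_le_one_add_mul_self (s := u - 1) (by linarith) ha0 ha1
  rw [add_sub_cancel] at hBernoulli
  linarith [Real.add_one_le_exp u, mul_le_of_le_one_left hu ha1]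

theorem setLIntegral_Ioc_rpow_mul_sub_one_rpow_ne_top {a : ℝ} (ha : a < 1) (b T : ℝ) :
    ∫⁻ t in Ioc 1 T, ENNReal.ofReal t ^ b * ENNReal.ofReal (t - 1) ^ (-a) ≠ ⊤ := by
  have hsingular : ∫⁻ t in Ioc 1 T, ENNReal.ofReal (t - 1) ^ (-a) ≠ ⊤ := by
    have hint : IntervalIntegrable (fun t : ℝ => t ^ (-a)) volume 0 (T - 1) :=
      intervalIntegral.intervalIntegrable_rpow' (by linarith)
    have hshift := (hint.comp_sub_right 1).1
    simp only [zero_add, sub_add_cancel] at hshift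
    refine ((setLIntegral_congr_fun measurableSet_Ioc fun t ht => ?_).trans_lt hshift.2).ne
    have ht1 : 0 < t - 1 := sub_pos.2 ht.1
    rw [ENNReal.ofReal_rpow_of_pos ht1, Real.enorm_eq_ofReal (by positivity)]
  have hbounded : ∀ t ∈ Ioc 1 T, ENNReal.ofReal t ^ b ≤ ENNReal.ofReal T ^ |b| := fun t ht => by
    have h1 : 1 ≤ ENNReal.ofReal t := ENNReal.one_le_ofReal.2 ht.1.le
    calc ENNReal.ofReal t ^ b ≤ ENNReal.ofReal t ^ |b| :=
          ENNReal.rpow_le_rpow_of_exponent_le h1 (le_abs_self b)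
      _ ≤ ENNReal.ofReal T ^ |b| :=
          ENNReal.rpow_le_rpow (ENNReal.ofReal_le_ofReal ht.2) (abs_nonneg b)
  refine ne_top_of_le_ne_top (ENNReal.mul_ne_top (ENNReal.rpow_ne_top_of_nonneg (abs_nonneg b)
    ENNReal.ofReal_ne_top) hsingular) (b := ENNReal.ofReal T ^ |b| * _) ?_
  rw [← lintegral_const_mul _ (by fun_prop)]
  exact setLIntegral_mono' measurableSet_Ioc fun t ht => mul_le_mul_left (hbounded t ht) _

theorem ofReal_exp_le_rpow_mul_rpow_enorm {E : Type*} [NormedAddCommGroup E] {γ t a : ℝ}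
    (hγ : 1 ≤ γ) (ht : 1 < t) (ha0 : 0 ≤ a) (ha1 : a ≤ 1) {x : E} (hx : x ≠ 0) :
    ENNReal.ofReal (Real.exp (‖x‖ ^ γ * (1 - t ^ γ))) ≤
      ENNReal.ofReal (t - 1) ^ (-a) * ‖x‖ₑ ^ (-(γ * a)) := by
  have hx0 : 0 < ‖x‖ := norm_pos_iff.2 hx
  have ht1 : 0 < t - 1 := sub_pos.2 ht
  have htγ : t ≤ t ^ γ := Real.self_le_rpow_of_one_le ht.le hγ
  have hexp : Real.exp (‖x‖ ^ γ * (1 - t ^ γ)) ≤ (t - 1) ^ (-a) * ‖x‖ ^ (-(γ * a)) := by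
    calc Real.exp (‖x‖ ^ γ * (1 - t ^ γ)) ≤ Real.exp (-((t - 1) * ‖x‖ ^ γ)) := by
          rw [Real.exp_le_exp, mul_comm, ← neg_mul]
          gcongr
          linarith
      _ ≤ (((t - 1) * ‖x‖ ^ γ) ^ a)⁻¹ := by
          rw [Real.exp_neg]
          gcongr
          exact rpow_le_exp (by positivity) ha0 ha1
      _ = (t - 1) ^ (-a) * ‖x‖ ^ (-(γ * a)) := by
          rw [Real.mul_rpow ht1.le (by positivity), ← Real.rpow_mul hx0.le, mul_inv,
            Real.rpow_neg ht1.le, Real.rpow_neg hx0.le]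
  rw [← ofReal_norm, ENNReal.ofReal_rpow_of_pos ht1, ENNReal.ofReal_rpow_of_pos hx0,
    ← ENNReal.ofReal_mul (by positivity)]
  exact ENNReal.ofReal_le_ofReal hexp

theorem weightedLpNorm_lintegral_mul_le {α β : Type*} [MeasurableSpace α] [MeasurableSpace β]
    {μ : Measure α} {τ : Measure β} [SFinite μ] [SFinite τ] {w : α → ℝ≥0∞} {ρ : β → ℝ≥0∞}
    {K : β → α → ℝ≥0∞} (hw : Measurable w) (hρ : Measurable ρ)
    (hK : Measurable (Function.uncurry K)) {p : ℝ} (hp : 1 < p) {M : ℝ≥0∞}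
    (hM : ∀ᵐ t ∂τ, weightedLpNorm w p μ (K t) ≤ M) :
    weightedLpNorm w p μ (fun x => ∫⁻ t, ρ t * K t x ∂τ) ≤ (∫⁻ t, ρ t ∂τ) * M := by
  have hp0 : 0 < p := one_pos.trans hp
  have hKswap : Measurable fun q : α × β => K q.2 q.1 := hK.comp measurable_swap
  have hKx (x : α) : Measurable fun t => K t x := hK.comp measurable_prodMk_right
  have hKt (t : β) : Measurable (K t) := hK.comp measurable_prodMk_left
  rw [weightedLpNorm_le_iff hp0]
  calc ∫⁻ x, ((∫⁻ t, ρ t * K t x ∂τ) * w x) ^ p ∂μ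
      ≤ ∫⁻ x, (∫⁻ t, ρ t ∂τ) ^ (p - 1) * ∫⁻ t, ρ t * (K t x * w x) ^ p ∂τ ∂μ :=
        lintegral_mono fun x => by
        rw [← lintegral_mul_const _ (by fun_prop)]
        simp only [mul_assoc]
        exact lintegral_mul_rpow_le hρ ((hKx x).mul_const _) hp
    _ = (∫⁻ t, ρ t ∂τ) ^ (p - 1) * ∫⁻ t, ρ t * weightedLpNorm w p μ (K t) ^ p ∂τ := by
        rw [lintegral_const_mul _ (Measurable.lintegral_prod_right' (ν := τ)
            (f := fun q : α × β => ρ q.2 * (K q.2 q.1 * w q.1) ^ p) (by fun_prop)),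
          lintegral_lintegral_swap (f := fun x t => ρ t * (K t x * w x) ^ p)
            (Measurable.aemeasurable (by fun_prop))]
        congr 1
        refine lintegral_congr fun t => ?_
        rw [lintegral_const_mul _ (by fun_prop), weightedLpNorm_rpow hp0]
    _ ≤ (∫⁻ t, ρ t ∂τ) ^ (p - 1) * ∫⁻ t, ρ t * M ^ p ∂τ := by
        refine mul_le_mul_right (lintegral_mono_ae ?_) _
        filter_upwards [hM] with t ht
        gcongr
    _ = ((∫⁻ t, ρ t ∂τ) * M) ^ p := by
        rw [lintegral_mul_const _ hρ, ENNReal.mul_rpow_of_nonneg _ _ hp0.le, ← mul_assoc]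
        conv_rhs => rw [← sub_add_cancel p 1,
          ENNReal.rpow_add_of_nonneg _ _ (sub_nonneg.2 hp.le) zero_le_one, ENNReal.rpow_one]
        ring_nf

variable {E : Type*} [NormedAddCommGroup E] [NormedSpace ℝ E]

/-- The integral over `1 < t ≤ T` in the renormalization operator, with `F` in place of the inner
integral; the remaining factor `‖x‖ₑ` bounds the multiplier `⟨x, ·⟩`. -/
noncomputable def duhamel (γ c T : ℝ) (F : E → ℝ≥0∞) (x : E) : ℝ≥0∞ :=
  ∫⁻ t in Ioc 1 T, ENNReal.ofReal t ^ (-c) *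
    ENNReal.ofReal (Real.exp (‖x‖ ^ γ * (1 - t ^ γ))) * ‖x‖ₑ * F (t • x)

-- The damping is traded for the decay `‖x‖ ^ (-m)`, at the price of a singularity at `t = 1`; the
-- factor `t ^ s` is there to be absorbed by the dilation of `F`.
theorem duhamel_mul_rpow_enorm_le {γ m : ℝ} (hγ : 1 ≤ γ) (hm0 : 0 ≤ m) (hmγ : m ≤ γ) (c T s ν : ℝ)
    (F : E → ℝ≥0∞) {x : E} (hx : x ≠ 0) :
    duhamel γ c T F x * ‖x‖ₑ ^ ν ≤
      (∫⁻ t in Ioc 1 T, ENNReal.ofReal t ^ (-c - s) * ENNReal.ofReal (t - 1) ^ (-(m / γ)) *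
        (ENNReal.ofReal t ^ s * F (t • x))) * ‖x‖ₑ ^ (ν + 1 - m) := by
  have hγ0 : 0 < γ := by linarith
  have hx0 : ‖x‖ₑ ≠ 0 := enorm_ne_zero.2 hx
  have hxtop (a : ℝ) : ‖x‖ₑ ^ a ≠ ⊤ := ENNReal.rpow_ne_top_of_ne_zero hx0 enorm_ne_top
  rw [duhamel, ← lintegral_mul_const' _ _ (hxtop _), ← lintegral_mul_const' _ _ (hxtop _)]
  refine setLIntegral_mono' measurableSet_Ioc fun t ht => ?_
  have ht0 : ENNReal.ofReal t ≠ 0 := (ENNReal.ofReal_pos.2 (by linarith [ht.1])).ne'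
  have hdecay : ENNReal.ofReal (Real.exp (‖x‖ ^ γ * (1 - t ^ γ))) ≤
      ENNReal.ofReal (t - 1) ^ (-(m / γ)) * ‖x‖ₑ ^ (-m) := by
    simpa only [mul_div_cancel₀ m hγ0.ne'] using ofReal_exp_le_rpow_mul_rpow_enorm hγ ht.1
      (div_nonneg hm0 hγ0.le) ((div_le_one hγ0).2 hmγ) hx
  have hweight : ‖x‖ₑ ^ (ν + 1 - m) = ‖x‖ₑ ^ (-m) * ‖x‖ₑ * ‖x‖ₑ ^ ν := by
    rw [show ν + 1 - m = -m + 1 + ν by ring, ENNReal.rpow_add _ _ hx0 enorm_ne_top,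
      ENNReal.rpow_add _ _ hx0 enorm_ne_top, ENNReal.rpow_one]
  have htime : ENNReal.ofReal t ^ (-c) = ENNReal.ofReal t ^ (-c - s) * ENNReal.ofReal t ^ s := by
    rw [← ENNReal.rpow_add _ _ ht0 ENNReal.ofReal_ne_top, sub_add_cancel]
  calc ENNReal.ofReal t ^ (-c) * ENNReal.ofReal (Real.exp (‖x‖ ^ γ * (1 - t ^ γ))) * ‖x‖ₑ *
        F (t • x) * ‖x‖ₑ ^ ν
      ≤ ENNReal.ofReal t ^ (-c) * (ENNReal.ofReal (t - 1) ^ (-(m / γ)) * ‖x‖ₑ ^ (-m)) * ‖x‖ₑ *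
        F (t • x) * ‖x‖ₑ ^ ν := by gcongr
    _ = _ := by
      rw [htime, hweight]
      ring

variable [MeasurableSpace E] [BorelSpace E] [FiniteDimensional ℝ E]

theorem measurable_duhamel (γ c T : ℝ) {F : E → ℝ≥0∞} (hF : Measurable F) :
    Measurable (duhamel γ c T F) :=
  Measurable.lintegral_prod_right' (ν := volume.restrict (Ioc 1 T)) (f := fun q : E × ℝ =>
    ENNReal.ofReal q.2 ^ (-c) * ENNReal.ofReal (Real.exp (‖q.1‖ ^ γ * (1 - q.2 ^ γ))) * ‖q.1‖ₑ *
      F (q.2 • q.1)) (by fun_prop)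

theorem exists_weightedLpNorm_duhamel_le [Nontrivial E] (μ : Measure E) [μ.IsAddHaarMeasure]
    {γ m p : ℝ} (hp : 1 < p) (hγ : 1 ≤ γ) (hm0 : 0 ≤ m) (hmγ : m < γ) (c T ν : ℝ) :
    ∃ C : ℝ≥0∞, C ≠ ⊤ ∧ ∀ F : E → ℝ≥0∞, Measurable F →
      weightedLpNorm (fun x => ‖x‖ₑ ^ ν) p μ (duhamel γ c T F) ≤
        C * weightedLpNorm (fun x => ‖x‖ₑ ^ (ν + 1 - m)) p μ F := by
  set s : ℝ := finrank ℝ E / p + (ν + 1 - m)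
  set ρ : ℝ → ℝ≥0∞ := fun t =>
    ENNReal.ofReal t ^ (-c - s) * ENNReal.ofReal (t - 1) ^ (-(m / γ))
  refine ⟨∫⁻ t in Ioc 1 T, ρ t, setLIntegral_Ioc_rpow_mul_sub_one_rpow_ne_top
    ((div_lt_one (by linarith)).2 hmγ) _ _, fun F hF => ?_⟩
  have hp0 : 0 < p := one_pos.trans hp
  have hdilation : ∀ᵐ t ∂volume.restrict (Ioc 1 T),
      weightedLpNorm (fun x => ‖x‖ₑ ^ (ν + 1 - m)) p μ
        (fun x => ENNReal.ofReal t ^ s * F (t • x)) ≤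
      weightedLpNorm (fun x => ‖x‖ₑ ^ (ν + 1 - m)) p μ F := by
    filter_upwards [ae_restrict_mem measurableSet_Ioc] with t ht
    have ht0 : 0 < t := by linarith [ht.1]
    have ht0' : ENNReal.ofReal t ≠ 0 := (ENNReal.ofReal_pos.2 ht0).ne'
    rw [weightedLpNorm_const_mul hp0 (ENNReal.rpow_ne_top_of_ne_zero ht0' ENNReal.ofReal_ne_top),
      weightedLpNorm_rpow_enorm_comp_smul μ hF hp0 _ ht0, ← mul_assoc,
      ← ENNReal.rpow_add _ _ ht0' ENNReal.ofReal_ne_top, add_neg_cancel, ENNReal.rpow_zero,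
      one_mul]
  have hmean : weightedLpNorm (fun x => ‖x‖ₑ ^ ν) p μ (duhamel γ c T F) ≤
      weightedLpNorm (fun x => ‖x‖ₑ ^ (ν + 1 - m)) p μ
        (fun x => ∫⁻ t in Ioc 1 T, ρ t * (ENNReal.ofReal t ^ s * F (t • x))) := by
    refine ENNReal.rpow_le_rpow (lintegral_mono_ae ?_) (by positivity)
    filter_upwards [ae_enorm_ne_zero μ] with x hx
    exact ENNReal.rpow_le_rpow
      (duhamel_mul_rpow_enorm_le hγ hm0 hmγ.le c T s ν F (enorm_ne_zero.1 hx)) hp0.le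
  refine hmean.trans (weightedLpNorm_lintegral_mul_le (by fun_prop) (by fun_prop) ?_ hp hdilation)
  change Measurable fun q : ℝ × E => ENNReal.ofReal q.1 ^ s * F (q.1 • q.2)
  fun_prop

end DuhamelSmoothing

section ExponentialWeight

variable {E : Type*} [NormedAddCommGroup E]

/-- The exponential factor `e^{|x|}` of the weight `u_ν`, as an extended nonnegative number. -/
noncomputable def expWeight (x : E) : ℝ≥0∞ := ENNReal.ofReal (Real.exp ‖x‖)

/-- The weight `u_ν(x) = e^{|x|} |x|^ν` as an extended nonnegative number. It differs from
`ENNReal.ofReal (uWeight ν x)` at the origin when `ν < 0`. -/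
noncomputable def expPowWeight (ν : ℝ) (x : E) : ℝ≥0∞ := expWeight x * ‖x‖ₑ ^ ν

theorem expWeight_ne_top (x : E) : expWeight x ≠ ⊤ := ENNReal.ofReal_ne_top

theorem expWeight_mono {x y : E} (h : ‖x‖ ≤ ‖y‖) : expWeight x ≤ expWeight y :=
  ENNReal.ofReal_le_ofReal (Real.exp_le_exp.2 h)

theorem expWeight_add_le (x y : E) : expWeight (x + y) ≤ expWeight x * expWeight y := by
  rw [expWeight, expWeight, expWeight, ← ENNReal.ofReal_mul (by positivity), ← Real.exp_add]
  exact ENNReal.ofReal_le_ofReal (Real.exp_le_exp.2 (norm_add_le x y))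

section Dilation

variable [NormedSpace ℝ E]

theorem expWeight_le_smul {t : ℝ} (ht : 1 ≤ t) (x : E) : expWeight x ≤ expWeight (t • x) := by
  refine expWeight_mono ?_
  rw [norm_smul, Real.norm_of_nonneg (by linarith)]
  exact le_mul_of_one_le_left (norm_nonneg x) ht

theorem duhamel_mul_expWeight_le (γ c T : ℝ) {F G : E → ℝ≥0∞}
    (hFG : ∀ x, F x * expWeight x ≤ G x) (x : E) :
    duhamel γ c T F x * expWeight x ≤ duhamel γ c T G x := by
  rw [duhamel, duhamel, ← lintegral_mul_const' _ _ (expWeight_ne_top x)]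
  refine setLIntegral_mono' measurableSet_Ioc fun t ht => ?_
  rw [mul_assoc]
  exact mul_le_mul_right
    ((mul_le_mul_right (expWeight_le_smul ht.1.le x) _).trans (hFG (t • x))) _

/-- The term of the renormalization operator that is linear in the field, with `φ` in place of
the field. -/
noncomputable def dampedDilation (γ c β : ℝ) (φ : E → ℝ≥0∞) (x : E) : ℝ≥0∞ :=
  ENNReal.ofReal (β ^ c * Real.exp (‖x‖ ^ γ * (1 - β ^ (-γ)))) * φ (β⁻¹ • x)

theorem dampedDilation_mul_expWeight_le {γ β : ℝ} (hγ : 0 ≤ γ) (hβ : β ∈ Ioc 0 1) (c : ℝ)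
    (φ : E → ℝ≥0∞) (x : E) :
    dampedDilation γ c β φ x * expWeight x ≤
      ENNReal.ofReal (β ^ c) * (φ (β⁻¹ • x) * expWeight (β⁻¹ • x)) := by
  have hβ1 : 1 ≤ β ^ (-γ) :=
    Real.one_le_rpow_of_pos_of_le_one_of_nonpos hβ.1 hβ.2 (neg_nonpos.2 hγ)
  have hexp : Real.exp (‖x‖ ^ γ * (1 - β ^ (-γ))) ≤ 1 :=
    Real.exp_le_one_iff.2 (mul_nonpos_of_nonneg_of_nonpos (by positivity) (by linarith))
  have hfactor : β ^ c * Real.exp (‖x‖ ^ γ * (1 - β ^ (-γ))) ≤ β ^ c :=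
    mul_le_of_le_one_right (Real.rpow_nonneg hβ.1.le c) hexp
  rw [dampedDilation, mul_assoc]
  exact mul_le_mul' (ENNReal.ofReal_le_ofReal hfactor)
    (mul_le_mul_right (expWeight_le_smul ((one_le_inv₀ hβ.1).2 hβ.2) x) _)

end Dilation

variable [MeasurableSpace E]

theorem weightedLpNorm_expPowWeight (μ : Measure E) (p ν : ℝ) (φ : E → ℝ≥0∞) :
    weightedLpNorm (expPowWeight ν) p μ φ =
      weightedLpNorm (fun x => ‖x‖ₑ ^ ν) p μ (fun x => φ x * expWeight x) := by
  simp only [weightedLpNorm, expPowWeight, mul_assoc]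

theorem lconvolution_mul_expWeight_le (μ : Measure E) (φ ψ : E → ℝ≥0∞) (x : E) :
    (φ ⋆ₗ[μ] ψ) x * expWeight x ≤
      ((fun y => φ y * expWeight y) ⋆ₗ[μ] (fun y => ψ y * expWeight y)) x := by
  rw [lconvolution_def, lconvolution_def, ← lintegral_mul_const' _ _ (expWeight_ne_top x)]
  refine lintegral_mono fun y => ?_
  calc φ y * ψ (-y + x) * expWeight x
      = φ y * ψ (-y + x) * expWeight (y + (-y + x)) := by rw [add_neg_cancel_left]
    _ ≤ φ y * ψ (-y + x) * (expWeight y * expWeight (-y + x)) :=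
        mul_le_mul_right (expWeight_add_le _ _) _
    _ = _ := by ring

variable [BorelSpace E]

@[fun_prop]
theorem measurable_expWeight : Measurable (expWeight : E → ℝ≥0∞) := by
  unfold expWeight; fun_prop

@[fun_prop]
theorem measurable_expPowWeight (ν : ℝ) : Measurable (expPowWeight ν : E → ℝ≥0∞) := by
  unfold expPowWeight; fun_prop

variable [NormedSpace ℝ E]

theorem measurable_dampedDilation (γ c β : ℝ) {φ : E → ℝ≥0∞} (hφ : Measurable φ) :
    Measurable (dampedDilation γ c β φ) := by
  unfold dampedDilation; fun_prop

variable [FiniteDimensional ℝ E] (μ : Measure E) [μ.IsAddHaarMeasure] {γ p ν : ℝ}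

theorem weightedLpNorm_expPowWeight_dampedDilation_le {β : ℝ} (hγ : 0 ≤ γ) (hβ : β ∈ Ioc 0 1)
    (hp : 0 < p) (c : ℝ) {φ : E → ℝ≥0∞} (hφ : Measurable φ) :
    weightedLpNorm (expPowWeight ν) p μ (dampedDilation γ c β φ) ≤
      ENNReal.ofReal (β ^ (c + (finrank ℝ E / p + ν))) *
        weightedLpNorm (expPowWeight ν) p μ φ := by
  rw [weightedLpNorm_expPowWeight, weightedLpNorm_expPowWeight]
  calc weightedLpNorm (fun x => ‖x‖ₑ ^ ν) p μ (fun x => dampedDilation γ c β φ x * expWeight x)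
      ≤ weightedLpNorm (fun x => ‖x‖ₑ ^ ν) p μ
          (fun x => ENNReal.ofReal (β ^ c) * (φ (β⁻¹ • x) * expWeight (β⁻¹ • x))) :=
        weightedLpNorm_mono_ae hp.le (.of_forall fun x =>
          mul_le_mul_left (dampedDilation_mul_expWeight_le hγ hβ c φ x) _)
    _ = ENNReal.ofReal (β ^ c) * (ENNReal.ofReal β⁻¹ ^ (-(finrank ℝ E / p + ν)) *
          weightedLpNorm (fun x => ‖x‖ₑ ^ ν) p μ (fun x => φ x * expWeight x)) := by
        rw [weightedLpNorm_const_mul hp ENNReal.ofReal_ne_top,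
          weightedLpNorm_rpow_enorm_comp_smul μ (φ := fun x => φ x * expWeight x) (by fun_prop)
            hp ν (inv_pos.2 hβ.1)]
    _ = _ := by
        rw [← mul_assoc, ENNReal.ofReal_rpow_of_pos (inv_pos.2 hβ.1),
          Real.inv_rpow hβ.1.le, Real.rpow_neg hβ.1.le, inv_inv,
          ← ENNReal.ofReal_mul (Real.rpow_nonneg hβ.1.le c), Real.rpow_add hβ.1 c]

theorem exists_weightedLpNorm_expPowWeight_duhamel_lconvolution_le [Nontrivial E] (hp : 2 < p)
    (hlower : finrank ℝ E < 2 * (finrank ℝ E / p + ν)) (hupper : finrank ℝ E / p + ν < finrank ℝ E)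
    (hγ : finrank ℝ E + 1 - (finrank ℝ E / p + ν) < γ) (c T : ℝ) :
    ∃ C : ℝ≥0∞, C ≠ ⊤ ∧ ∀ φ ψ : E → ℝ≥0∞, Measurable φ → Measurable ψ →
      weightedLpNorm (expPowWeight ν) p μ (duhamel γ c T (φ ⋆ₗ[μ] ψ)) ≤
        C * (weightedLpNorm (expPowWeight ν) p μ φ * weightedLpNorm (expPowWeight ν) p μ ψ) := by
  obtain ⟨C₁, hC₁, hconv⟩ := exists_weightedLpNorm_lconvolution_le μ hp hlower hupper
  obtain ⟨C₂, hC₂, hduhamel⟩ := exists_weightedLpNorm_duhamel_le μ (p := p) (γ := γ)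
    (m := finrank ℝ E + 1 - (finrank ℝ E / p + ν)) (by linarith) (by linarith) (by linarith)
    hγ c T ν
  rw [show ν + 1 - (finrank ℝ E + 1 - (finrank ℝ E / p + ν)) =
    ν - (finrank ℝ E - (finrank ℝ E / p + ν)) by ring] at hduhamel
  refine ⟨C₂ * C₁, ENNReal.mul_ne_top hC₂ hC₁, fun φ ψ hφ hψ => ?_⟩
  simp only [weightedLpNorm_expPowWeight]
  have hmajorant := weightedLpNorm_mono_ae (w := fun x : E => ‖x‖ₑ ^ ν) (μ := μ) (p := p)
    (by linarith) (.of_forall fun x => mul_le_mul_left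
      (duhamel_mul_expWeight_le γ c T (lconvolution_mul_expWeight_le μ φ ψ) x) _)
  refine hmajorant.trans ((hduhamel _ (measurable_lconvolution μ (by fun_prop) (by fun_prop))).trans
    ?_)
  rw [mul_assoc]
  exact mul_le_mul_right (hconv _ _ (by fun_prop) (by fun_prop)) _

end ExponentialWeight

section Kernel

variable {d : ℕ}

theorem norm_toC (η : Ed d) : ‖toC η‖ = ‖η‖ := by
  simp [EuclideanSpace.norm_eq, toC]

theorem pairC_eq_inner (η : Ed d) (v : EdC d) : pairC η v = inner ℂ (toC η) v := by
  simp [pairC, toC, PiLp.inner_apply, mul_comm]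

theorem lerayC_eq_starProjection (η : Ed d) (v : EdC d) :
    lerayC η v = (ℂ ∙ toC η)ᗮ.starProjection v := by
  rw [Submodule.starProjection_orthogonal_val, Submodule.starProjection_singleton,
    ← pairC_eq_inner, norm_toC]
  ext i
  simp [lerayC, toC]

theorem enorm_pairC_le (η : Ed d) (v : EdC d) : ‖pairC η v‖ₑ ≤ ‖η‖ₑ * ‖v‖ₑ := by
  rw [← ofReal_norm, ← ofReal_norm η, ← ofReal_norm v, ← ENNReal.ofReal_mul (norm_nonneg _),
    pairC_eq_inner, ← norm_toC]
  exact ENNReal.ofReal_le_ofReal (norm_inner_le_norm _ _)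

theorem enorm_lerayC_le (η : Ed d) (v : EdC d) : ‖lerayC η v‖ₑ ≤ ‖v‖ₑ := by
  rw [lerayC_eq_starProjection, enorm_le_iff_norm_le]
  exact Submodule.norm_starProjection_apply_le _ v

theorem measurable_pairC : Measurable fun q : Ed d × EdC d => pairC q.1 q.2 := by
  unfold pairC; fun_prop

theorem measurable_lerayC : Measurable fun q : Ed d × EdC d => lerayC q.1 q.2 := by
  have hpair := measurable_pairC (d := d)
  refine (WithLp.measurable_toLp 2 (Fin d → ℂ)).comp (measurable_pi_lambda _ fun i => ?_)
  fun_prop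

variable {γ β : ℝ} {ϑ : Ed d → EdC d} {φ : Ed d → ℝ≥0∞}

theorem aestronglyMeasurable_renormKernelC {α : Type*} [MeasurableSpace α] {τ : Measure α}
    [SFinite τ] {η : α → Ed d} {t : α → ℝ} (hη : Measurable η) (ht : Measurable t)
    (hϑ : AEStronglyMeasurable ϑ) :
    AEStronglyMeasurable (fun q : α × Ed d => renormKernelC d γ ϑ (η q.1) (t q.1) q.2)
      (τ.prod volume) := by
  have hreflect : Measure.QuasiMeasurePreserving
      (fun q : α × Ed d => t q.1 • η q.1 - q.2) (τ.prod volume) volume :=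
    QuasiMeasurePreserving.prod_of_right (by fun_prop) (.of_forall fun a =>
      (Measure.measurePreserving_sub_left volume (t a • η a)).quasiMeasurePreserving)
  have hfirst := (hϑ.comp_quasiMeasurePreserving hreflect).aemeasurable
  have hsecond := (hϑ.comp_snd (μ := τ)).aemeasurable
  have hηq : AEMeasurable (fun q : α × Ed d => η q.1) (τ.prod volume) := by fun_prop
  have hscalar : Measurable fun q : α × Ed d =>
      t q.1 ^ (-(γ - d - 1)) * Real.exp (‖η q.1‖ ^ γ * (1 - t q.1 ^ γ)) := by fun_prop
  exact (hscalar.aemeasurable.smul ((measurable_pairC.comp_aemeasurable (hηq.prodMk hfirst)).smul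
    (measurable_lerayC.comp_aemeasurable (hηq.prodMk hsecond)))).aestronglyMeasurable

theorem aestronglyMeasurable_renormC (hβ : β ≠ 0) (hϑ : AEStronglyMeasurable ϑ) :
    AEStronglyMeasurable (renormC d γ β ϑ) := by
  have hscalar : Measurable fun η : Ed d =>
      β ^ (γ - d - 1) * Real.exp (‖η‖ ^ γ * (1 - β ^ (-γ))) := by fun_prop
  have hlinear := hscalar.aestronglyMeasurable.smul (hϑ.comp_quasiMeasurePreserving
    (Measure.quasiMeasurePreserving_smul volume (inv_ne_zero hβ)))
  have hkernel := aestronglyMeasurable_renormKernelC (γ := γ) (α := Ed d × ℝ)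
    (τ := volume.prod (volume.restrict (Ioc 1 β⁻¹))) measurable_fst measurable_snd hϑ
  exact hlinear.add (hkernel.integral_prod_right'.integral_prod_right'.fun_const_smul _)

theorem enorm_renormKernelC_le {t : ℝ} (ht : 0 < t) (η x : Ed d) :
    ‖renormKernelC d γ ϑ η t x‖ₑ ≤
      ENNReal.ofReal t ^ (-(γ - d - 1)) * ENNReal.ofReal (Real.exp (‖η‖ ^ γ * (1 - t ^ γ))) *
        ‖η‖ₑ * (‖ϑ x‖ₑ * ‖ϑ (t • η - x)‖ₑ) := by
  rw [renormKernelC, enorm_smul, enorm_smul, Real.enorm_of_nonneg (by positivity),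
    ENNReal.ofReal_mul (by positivity), ENNReal.ofReal_rpow_of_pos ht]
  calc _ ≤ ENNReal.ofReal (t ^ (-(γ - d - 1))) *
        ENNReal.ofReal (Real.exp (‖η‖ ^ γ * (1 - t ^ γ))) *
          ((‖η‖ₑ * ‖ϑ (t • η - x)‖ₑ) * ‖ϑ x‖ₑ) :=
        mul_le_mul_right (mul_le_mul' (enorm_pairC_le _ _) (enorm_lerayC_le _ _)) _
    _ = _ := by ring

theorem lintegral_renormKernelC_le (hϑφ : ∀ᵐ x, ‖ϑ x‖ₑ ≤ φ x) (T : ℝ) (η : Ed d) :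
    ∫⁻ t in Ioc 1 T, ∫⁻ x, ‖renormKernelC d γ ϑ η t x‖ₑ ≤
      duhamel γ (γ - d - 1) T (φ ⋆ₗ[volume] φ) η := by
  refine setLIntegral_mono' measurableSet_Ioc fun t ht => ?_
  have ht0 : 0 < t := by linarith [ht.1]
  have hfactor_ne_top : ENNReal.ofReal t ^ (-(γ - d - 1)) *
      ENNReal.ofReal (Real.exp (‖η‖ ^ γ * (1 - t ^ γ))) * ‖η‖ₑ ≠ ⊤ :=
    ENNReal.mul_ne_top (ENNReal.mul_ne_top (ENNReal.rpow_ne_top_of_ne_zero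
      (ENNReal.ofReal_pos.2 ht0).ne' ENNReal.ofReal_ne_top) ENNReal.ofReal_ne_top) enorm_ne_top
  rw [lconvolution_def, ← lintegral_const_mul' _ _ hfactor_ne_top]
  refine lintegral_mono_ae ?_
  filter_upwards [hϑφ, (Measure.measurePreserving_sub_left volume
    (t • η)).quasiMeasurePreserving.ae hϑφ] with x hx hreflect
  rw [neg_add_eq_sub]
  exact (enorm_renormKernelC_le ht0 η x).trans (mul_le_mul_right (mul_le_mul' hx hreflect) _)

theorem renormDefinedC_of_duhamel_ne_top (hϑ : AEStronglyMeasurable ϑ)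
    (hϑφ : ∀ᵐ x, ‖ϑ x‖ₑ ≤ φ x) {η : Ed d}
    (h : duhamel γ (γ - d - 1) β⁻¹ (φ ⋆ₗ[volume] φ) η ≠ ⊤) : RenormDefinedC d γ β ϑ η := by
  have hkernel := aestronglyMeasurable_renormKernelC (γ := γ)
    (τ := volume.restrict (Ioc 1 β⁻¹)) (η := fun _ => η) (t := fun t => t)
    measurable_const measurable_id hϑ
  have hprod : (volume : Measure (ℝ × Ed d)).restrict (Ioc 1 β⁻¹ ×ˢ univ) =
      (volume.restrict (Ioc 1 β⁻¹)).prod volume := by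
    rw [Measure.volume_eq_prod, ← Measure.prod_restrict, Measure.restrict_univ]
  rw [RenormDefinedC, IntegrableOn, hprod]
  refine ⟨hkernel, ?_⟩
  rw [hasFiniteIntegral_iff_enorm, lintegral_prod _ hkernel.enorm]
  exact (lintegral_renormKernelC_le hϑφ β⁻¹ η).trans_lt h.lt_top

/-- The radial majorant of the renormalized field when `φ` is a radial majorant of the field. -/
noncomputable def renormMajorant (d : ℕ) (γ β : ℝ) (φ : Ed d → ℝ≥0∞) : Ed d → ℝ≥0∞ :=
  dampedDilation γ (γ - d - 1) β φ +
    fun η => ENNReal.ofReal |γ| * duhamel γ (γ - d - 1) β⁻¹ (φ ⋆ₗ[volume] φ) η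

theorem measurable_renormMajorant (γ β : ℝ) (hφ : Measurable φ) :
    Measurable (renormMajorant d γ β φ) :=
  (measurable_dampedDilation _ _ _ hφ).add
    ((measurable_duhamel _ _ _ (measurable_lconvolution _ hφ hφ)).const_mul _)

theorem ae_enorm_renormC_le (hβ : 0 < β) (hϑφ : ∀ᵐ x, ‖ϑ x‖ₑ ≤ φ x) :
    ∀ᵐ η, ‖renormC d γ β ϑ η‖ₑ ≤ renormMajorant d γ β φ η := by
  filter_upwards [(Measure.quasiMeasurePreserving_smul volume (inv_ne_zero hβ.ne')).ae hϑφ]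
    with η hη
  refine (enorm_add_le _ _).trans (add_le_add ?_ ?_)
  · rw [enorm_smul, Real.enorm_of_nonneg (by positivity)]
    exact mul_le_mul_right hη _
  · have hscalar : ‖Complex.I * (γ : ℂ)‖ₑ = ENNReal.ofReal |γ| := by
      rw [← ofReal_norm, norm_mul, Complex.norm_I, one_mul, Complex.norm_real, Real.norm_eq_abs]
    rw [enorm_smul, hscalar]
    refine mul_le_mul_right ((enorm_integral_le_lintegral_enorm _).trans
      ((lintegral_mono fun t => enorm_integral_le_lintegral_enorm _).trans
        (lintegral_renormKernelC_le hϑφ β⁻¹ η))) _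

end Kernel

section Radial

variable {d : ℕ}

theorem IsRadial.apply_smul_eq {α : Type*} {φ : Ed d → α} (hφ : IsRadial φ) (t : ℝ) {x y : Ed d}
    (h : ‖x‖ = ‖y‖) : φ (t • x) = φ (t • y) :=
  hφ _ _ (by rw [norm_smul, norm_smul, h])

theorem isRadial_lconvolution {φ ψ : Ed d → ℝ≥0∞} (hφ : IsRadial φ) (hψ : IsRadial ψ) :
    IsRadial (φ ⋆ₗ[volume] ψ) := by
  intro x y h
  set R := (ℝ ∙ (x - y))ᗮ.reflection
  have hR : R x = y := Submodule.reflection_sub h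
  rw [lconvolution_def, lconvolution_def, ← R.measurePreserving.lintegral_comp_emb
    R.toHomeomorph.measurableEmbedding (fun z => φ z * ψ (-z + y))]
  refine lintegral_congr fun z => ?_
  rw [hφ z (R z) (R.norm_map z).symm,
    hψ (-z + x) (-R z + y) (by rw [← hR, ← map_neg, ← map_add, R.norm_map])]

theorem isRadial_dampedDilation {φ : Ed d → ℝ≥0∞} (hφ : IsRadial φ) (γ c β : ℝ) :
    IsRadial (dampedDilation γ c β φ) := fun x y h => by
  rw [dampedDilation, dampedDilation, h, hφ.apply_smul_eq β⁻¹ h]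

theorem isRadial_duhamel {F : Ed d → ℝ≥0∞} (hF : IsRadial F) (γ c T : ℝ) :
    IsRadial (duhamel γ c T F) := fun x y h => by
  simp only [duhamel, ← ofReal_norm, h, hF.apply_smul_eq _ h]

theorem isRadial_renormMajorant {φ : Ed d → ℝ≥0∞} (hφ : IsRadial φ) (γ β : ℝ) :
    IsRadial (renormMajorant d γ β φ) := fun x y h => by
  simp only [renormMajorant, Pi.add_apply, isRadial_dampedDilation hφ γ _ β x y h,
    isRadial_duhamel (isRadial_lconvolution hφ hφ) γ _ β⁻¹ x y h]

end Radial

section InvariantBall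

variable {d : ℕ} {γ p ν : ℝ}

theorem wLpNorm_uWeight [Nontrivial (Ed d)] (hp : 0 ≤ p) (ν : ℝ) (g : Ed d → ℝ) :
    wLpNorm (uWeight ν) p g = weightedLpNorm (expPowWeight ν) p volume fun x => ‖g x‖ₑ := by
  unfold wLpNorm weightedLpNorm
  congr 1
  refine lintegral_congr_ae ?_
  filter_upwards [ae_enorm_ne_zero volume] with x hx
  have hx0 : 0 < ‖x‖ := norm_pos_iff.2 (enorm_ne_zero.1 hx)
  rw [expPowWeight, expWeight, uWeight, ← ofReal_norm x, ENNReal.ofReal_rpow_of_pos hx0,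
    Real.enorm_eq_ofReal_abs, ← ENNReal.ofReal_mul (by positivity),
    ← ENNReal.ofReal_mul (abs_nonneg _), ENNReal.ofReal_rpow_of_nonneg (by positivity) hp,
    Real.mul_rpow (abs_nonneg _) (by positivity)]

theorem ae_expPowWeight_ne_zero [Nontrivial (Ed d)] (ν : ℝ) :
    ∀ᵐ x : Ed d, expPowWeight ν x ≠ 0 := by
  filter_upwards [ae_enorm_ne_zero volume] with x hx
  exact mul_ne_zero (ENNReal.ofReal_pos.2 (Real.exp_pos _)).ne'
    (ENNReal.rpow_pos (pos_iff_ne_zero.2 hx) enorm_ne_top).ne'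

theorem memRLBall_iff [Nontrivial (Ed d)] (hp : 0 < p) {A : ℝ} {ϑ : Ed d → EdC d} :
    MemRLBall d p ν A ϑ ↔ AEStronglyMeasurable ϑ ∧ ∃ φ : Ed d → ℝ≥0∞, Measurable φ ∧
      IsRadial φ ∧ weightedLpNorm (expPowWeight ν) p volume φ ≤ ENNReal.ofReal A ∧
        ∀ᵐ x, ‖ϑ x‖ₑ ≤ φ x := by
  refine and_congr_right fun _ => ⟨?_, ?_⟩
  · rintro ⟨g, hg, hradial, hnorm, hbound⟩
    refine ⟨fun x => ‖g x‖ₑ, hg.enorm, fun x y h => by simp only [hradial x y h],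
      (wLpNorm_uWeight hp.le ν g).symm.trans_le hnorm, ?_⟩
    filter_upwards [hbound] with x hx
    exact enorm_le_iff_norm_le.2 (hx.trans (le_abs_self _))
  · rintro ⟨φ, hφ, hradial, hnorm, hbound⟩
    refine ⟨fun x => (φ x).toReal, hφ.ennreal_toReal,
      fun x y h => by simp only [hradial x y h], ?_, ?_⟩
    · rw [wLpNorm_uWeight hp.le]
      refine (weightedLpNorm_mono_ae hp.le (.of_forall fun x => mul_le_mul_left ?_ _)).trans hnorm
      rw [Real.enorm_of_nonneg ENNReal.toReal_nonneg]
      exact ENNReal.ofReal_toReal_le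
    · filter_upwards [hbound, ae_ne_top_of_weightedLpNorm_ne_top (by fun_prop) hφ hp
        (ae_expPowWeight_ne_zero ν) (ne_top_of_le_ne_top ENNReal.ofReal_ne_top hnorm)]
        with x hx hfinite
      rw [← toReal_enorm]
      exact ENNReal.toReal_mono hfinite hx

theorem convex_setOf_memRLBall [Nontrivial (Ed d)] (hp : 1 ≤ p) (ν A : ℝ) :
    Convex ℝ {ϑ : Ed d → EdC d | MemRLBall d p ν A ϑ} := by
  have hp0 : 0 < p := by linarith
  rintro ϑ₁ h₁ ϑ₂ h₂ a b ha hb hab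
  obtain ⟨hϑ₁, φ₁, hφ₁, hradial₁, hnorm₁, hbound₁⟩ := (memRLBall_iff hp0).1 h₁
  obtain ⟨hϑ₂, φ₂, hφ₂, hradial₂, hnorm₂, hbound₂⟩ := (memRLBall_iff hp0).1 h₂
  refine (memRLBall_iff hp0).2 ⟨(hϑ₁.const_smul a).add (hϑ₂.const_smul b),
    (fun x => ‖a‖ₑ * φ₁ x) + fun x => ‖b‖ₑ * φ₂ x, by fun_prop, fun x y h => ?_, ?_, ?_⟩
  · simp only [Pi.add_apply, hradial₁ x y h, hradial₂ x y h]
  · refine (weightedLpNorm_add_le (by fun_prop) (by fun_prop) (by fun_prop) hp).trans ?_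
    rw [weightedLpNorm_const_mul hp0 enorm_ne_top, weightedLpNorm_const_mul hp0 enorm_ne_top]
    calc _ ≤ ‖a‖ₑ * ENNReal.ofReal A + ‖b‖ₑ * ENNReal.ofReal A := by gcongr
      _ = ENNReal.ofReal A := by
        rw [← add_mul, Real.enorm_of_nonneg ha, Real.enorm_of_nonneg hb,
          ← ENNReal.ofReal_add ha hb, hab, ENNReal.ofReal_one, one_mul]
  · filter_upwards [hbound₁, hbound₂] with x hx₁ hx₂
    refine (enorm_add_le _ _).trans ?_
    simp only [Pi.smul_apply, enorm_smul]
    exact add_le_add (mul_le_mul_right hx₁ _) (mul_le_mul_right hx₂ _)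

theorem exists_weightedLpNorm_renormMajorant_le [Nontrivial (Ed d)] (hp : 2 < p)
    (hlower : d < 2 * (d / p + ν)) (hupper : d / p + ν < d) (hγ : d + 1 - (d / p + ν) < γ)
    {β : ℝ} (hβ : β ∈ Ioc 0 1) :
    ∃ C : ℝ≥0∞, C ≠ ⊤ ∧ ∀ φ : Ed d → ℝ≥0∞, Measurable φ →
      weightedLpNorm (expPowWeight ν) p volume (renormMajorant d γ β φ) ≤
        ENNReal.ofReal (β ^ (γ - (d + 1 - (d / p + ν)))) *
          weightedLpNorm (expPowWeight ν) p volume φ +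
        C * weightedLpNorm (expPowWeight ν) p volume φ ^ 2 := by
  have hfinrank : finrank ℝ (Ed d) = d := finrank_euclideanSpace_fin
  obtain ⟨C, hC, hbilinear⟩ := exists_weightedLpNorm_expPowWeight_duhamel_lconvolution_le
    (E := Ed d) (γ := γ) volume hp (by rwa [hfinrank]) (by rwa [hfinrank]) (by rwa [hfinrank])
    (γ - d - 1) β⁻¹
  refine ⟨ENNReal.ofReal |γ| * C, ENNReal.mul_ne_top ENNReal.ofReal_ne_top hC,
    fun φ hφ => ?_⟩
  have hlinear := weightedLpNorm_expPowWeight_dampedDilation_le volume (γ := γ) (ν := ν)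
    (p := p) (by linarith) hβ (by linarith) (γ - d - 1) hφ
  rw [hfinrank, show γ - d - 1 + (d / p + ν) = γ - (d + 1 - (d / p + ν)) by ring] at hlinear
  have hconv : Measurable (φ ⋆ₗ[volume] φ) := measurable_lconvolution _ hφ hφ
  refine (weightedLpNorm_add_le (by fun_prop) (measurable_dampedDilation _ _ _ hφ)
    ((measurable_duhamel _ _ _ hconv).const_mul _) (by linarith)).trans (add_le_add hlinear ?_)
  rw [weightedLpNorm_const_mul (by linarith) ENNReal.ofReal_ne_top, mul_assoc, sq]
  exact mul_le_mul_right (hbilinear φ φ hφ hφ) _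

theorem exists_pos_ofReal_mul_add_mul_sq_le {q : ℝ} (hq0 : 0 ≤ q) (hq1 : q < 1) {C : ℝ≥0∞}
    (hC : C ≠ ⊤) :
    ∃ A : ℝ, 0 < A ∧ ENNReal.ofReal q * ENNReal.ofReal A + C * ENNReal.ofReal A ^ 2 ≤
      ENNReal.ofReal A := by
  have hA : 0 < (1 - q) / (C.toReal + 1) := div_pos (by linarith) (by positivity)
  refine ⟨(1 - q) / (C.toReal + 1), hA, ?_⟩
  set A := (1 - q) / (C.toReal + 1)
  have hCA : C.toReal * A ≤ 1 - q := by
    have hdiv : (C.toReal + 1) * A = 1 - q := mul_div_cancel₀ _ (by positivity)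
    linarith
  rw [← ENNReal.ofReal_toReal hC, ← ENNReal.ofReal_pow hA.le, ← ENNReal.ofReal_mul hq0,
    ← ENNReal.ofReal_mul ENNReal.toReal_nonneg,
    ← ENNReal.ofReal_add (by positivity) (by positivity)]
  refine ENNReal.ofReal_le_ofReal ?_
  calc q * A + C.toReal * A ^ 2 = (q + C.toReal * A) * A := by ring
    _ ≤ 1 * A := by gcongr; linarith
    _ = A := one_mul A

theorem ae_renormDefinedC [Nontrivial (Ed d)] (hp : 0 < p) (hγ : γ ≠ 0) {β : ℝ}
    {ϑ : Ed d → EdC d} (hϑ : AEStronglyMeasurable ϑ) {φ : Ed d → ℝ≥0∞} (hφ : Measurable φ)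
    (hϑφ : ∀ᵐ x, ‖ϑ x‖ₑ ≤ φ x)
    (h : weightedLpNorm (expPowWeight ν) p volume (renormMajorant d γ β φ) ≠ ⊤) :
    ∀ᵐ η, RenormDefinedC d γ β ϑ η := by
  filter_upwards [ae_ne_top_of_weightedLpNorm_ne_top (by fun_prop)
    (measurable_renormMajorant γ β hφ) hp (ae_expPowWeight_ne_zero ν) h] with η hη
  refine renormDefinedC_of_duhamel_ne_top hϑ hϑφ fun htop => ?_
  rw [renormMajorant, Pi.add_apply, htop,
    ENNReal.mul_top (ENNReal.ofReal_pos.2 (abs_pos.2 hγ)).ne', add_top] at hη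
  exact hη rfl

theorem renorm_invariant_bounded_convex_set_general (hp : 2 < p)
    (hlower : d < 2 * (d / p + ν)) (hupper : d / p + ν < d) (hγ : d + 1 - (d / p + ν) < γ)
    {β : ℝ} (hβ : β ∈ Ioo 0 1) :
    ∃ A : ℝ, 0 < A ∧ Convex ℝ {ϑ : Ed d → EdC d | MemRLBall d p ν A ϑ} ∧
      ∀ ϑ : Ed d → EdC d, MemRLBall d p ν A ϑ →
        (∀ᵐ η, RenormDefinedC d γ β ϑ η) ∧ MemRLBall d p ν A (renormC d γ β ϑ) := by
  have hd : NeZero d := ⟨by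
    rintro rfl
    simp only [Nat.cast_zero, zero_div, zero_add] at hlower hupper
    linarith⟩
  have hp0 : 0 < p := by linarith
  obtain ⟨C, hC, hmajorant⟩ :=
    exists_weightedLpNorm_renormMajorant_le hp hlower hupper hγ ⟨hβ.1, hβ.2.le⟩
  obtain ⟨A, hA, hcontract⟩ := exists_pos_ofReal_mul_add_mul_sq_le (Real.rpow_nonneg hβ.1.le _)
    (Real.rpow_lt_one hβ.1.le hβ.2 (sub_pos.2 hγ)) hC
  refine ⟨A, hA, convex_setOf_memRLBall (by linarith) ν A, fun ϑ hmem => ?_⟩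
  obtain ⟨hϑ, φ, hφ, hradial, hnorm, hbound⟩ := (memRLBall_iff hp0).1 hmem
  have hball : weightedLpNorm (expPowWeight ν) p volume (renormMajorant d γ β φ) ≤
      ENNReal.ofReal A := (hmajorant φ hφ).trans (le_trans (by gcongr) hcontract)
  exact ⟨ae_renormDefinedC hp0 (by linarith) hϑ hφ hbound
      (ne_top_of_le_ne_top ENNReal.ofReal_ne_top hball),
    (memRLBall_iff hp0).2 ⟨aestronglyMeasurable_renormC hβ.1.ne' hϑ, renormMajorant d γ β φ,
      measurable_renormMajorant γ β hφ, isRadial_renormMajorant hradial γ β, hball,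
      ae_enorm_renormC_le hβ.1 hbound⟩⟩

end InvariantBall

section Exponents

variable {D γ p r ν κ : ℝ}

theorem mul_sub_div_add_mul_eq (hD : D ≠ 0) (hp : p ≠ 0) (hr : r ≠ 0)
    (hscaling : 1 / r = 2 / p + (2 * ν + κ) / D - 1) :
    D * (r - p) / r + p * (ν + κ + 1) = p * (D + 1 - (D / p + ν)) := by
  calc D * (r - p) / r + p * (ν + κ + 1) = D - p * D * (1 / r) + p * (ν + κ + 1) := by
        field_simp
    _ = p * (D + 1 - (D / p + ν)) := by
        rw [hscaling]
        field_simp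
        ring

theorem lt_two_mul_div_add (hD : 0 < D) (hp : p ≠ 0)
    (hscaling : 1 / r = 2 / p + (2 * ν + κ) / D - 1) (hκ : κ < D / r) :
    D < 2 * (D / p + ν) := by
  have hDr : D / r = 2 * (D / p) + 2 * ν + κ - D := by
    rw [div_eq_mul_one_div, hscaling]
    field_simp
    ring
  linarith

theorem div_add_lt_of_lt_mul_sub_one_div (hp : p ≠ 0) (hν : ν < D * (p - 1) / p) :
    D / p + ν < D := by
  rw [mul_sub, mul_one, sub_div, mul_div_cancel_right₀ _ hp] at hν
  linarith

theorem two_lt_and_lt_of_exponent_inequalities (hD : D ≠ 0) (hγ : 0 < γ) (hp : 0 < p)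
    (hr : 0 < r) (hscaling : 1 / r = 2 / p + (2 * ν + κ) / D - 1)
    (hlow : D + p * (γ - D - 1 + ν) < D * (r - p) / r + p * (ν + κ + 1))
    (hhigh : D * (r - p) / r + p * (ν + κ + 1) < γ * p * (r - 1) / r)
    (hgap : γ < γ * p * (r - 1) / r - D * (r - p) / r - p * (ν + κ + 1)) :
    2 < p ∧ D + 1 - (D / p + ν) < γ := by
  have hγr : γ * p * (r - 1) / r = p * (γ - γ / r) := by field_simp
  have hγr_pos : 0 < γ / r := div_pos hγ hr
  rw [sub_sub, mul_sub_div_add_mul_eq hD hp.ne' hr.ne' hscaling, hγr, ← mul_sub] at hgap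
  rw [mul_sub_div_add_mul_eq hD hp.ne' hr.ne' hscaling] at hlow hhigh
  rw [hγr] at hhigh
  have hlow' : D + p * (γ - D - 1 + ν) = p * (γ - (D + 1 - (D / p + ν))) := by
    field_simp
    ring
  rw [hlow'] at hlow
  set m := D + 1 - (D / p + ν)
  have hm_low : γ - m < m := lt_of_mul_lt_mul_left hlow hp.le
  have hm_high : m < γ - γ / r := lt_of_mul_lt_mul_left hhigh hp.le
  refine ⟨?_, by linarith⟩
  have hhalf : γ * 2 < γ * p := by
    have hmul : p * (γ - γ / r - m) < p * (γ / 2) := mul_lt_mul_of_pos_left (by linarith) hp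
    linarith
  exact lt_of_mul_lt_mul_left hhalf hγ.le

end Exponents

end

/-- existence of a renormalization-invariant bounded convex set in
`RL^p_{u_ν}`, under hypotheses (H1)–(H4). -/
theorem renorm_invariant_bounded_convex_set
    (d : ℕ) (hd : 2 ≤ d) (γ : ℝ) (hγ : 1 < γ) (p r ν κ : ℝ)
    (hp : 1 < p) (hr : 1 < r)
    (h1 : 1 / r = 2 / p + (2 * ν + κ) / d - 1)
    (h2 : κ < d / r)
    (h3 : (d - 1) / 2 * (1 - 2 / p) < ν)
    (h4 : ν < d * (p - 1) / p)
    (h5 : p ≤ 2 * r)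
    (h6 : 0 < max ν κ)
    (h7 : (d - 1) * (1 / r - 1 / p) ≤ ν + κ)
    (h8 : max 0 (d + p * ((γ - d - 1) + ν)) < d * (r - p) / r + p * (ν + κ + 1))
    (h9 : d * (r - p) / r + p * (ν + κ + 1) < γ * p * (r - 1) / r)
    (h10 : γ < γ * p * (r - 1) / r - d * (r - p) / r - p * (ν + κ + 1))
    (h11 : r / (r - 1) < p) :
    ∀ β ∈ Set.Ioo (0 : ℝ) 1, ∃ A : ℝ, 0 < A ∧
      Convex ℝ {ϑ : Ed d → EdC d | MemRLBall d p ν A ϑ} ∧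
      ∀ ϑ : Ed d → EdC d, MemRLBall d p ν A ϑ → MemRLBall d p ν A (renormC d γ β ϑ) := by
  intro β hβ
  have hd₀ : (0 : ℝ) < d := by positivity
  have hp₀ : 0 < p := by linarith
  obtain ⟨hp₂, hγ'⟩ := two_lt_and_lt_of_exponent_inequalities hd₀.ne' (by linarith) hp₀
    (by linarith) h1 ((le_max_right _ _).trans_lt h8) h9 h10
  obtain ⟨A, hA, hconvex, hinvariant⟩ := renorm_invariant_bounded_convex_set_general hp₂
    (lt_two_mul_div_add hd₀ hp₀.ne' h1 h2) (div_add_lt_of_lt_mul_sub_one_div hp₀.ne' h4) hγ' hβ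
  exact ⟨A, hA, hconvex, fun ϑ hϑ => (hinvariant ϑ hϑ).2⟩
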